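/- Consider the general Curie–Weiss model CW(ρ) at inverse temperature β=1, where ρ is a symmetric probability measure on ℝ with ∫x²dρ(x)=1, ρ([−L,L])=1 for some finite L, the function h(s)=s²/2 − log∫e^{sx}dρ(x) has s=0 as the unique root of h'(s)=0, and there is k≥2 with h^{(i)}(0)=0 for 0≤i≤2k−1 and h^{(2k)}(0)>0. Let W = n^{1/(2k)}·m(X), where m(X) = (X₁+⋯+Xₙ)/n, and let Y have density p(y) = c₁·exp(−h^{(2k)}(0)·y^{2k}/(2k)!) with normalizing constant c₁. Then there is a constant C>0 depending only on ρ such that |P(W ≥ z)/P(Y ≥ z) − 1| ≤ C·n^{−1/k}·(1+z^{2k+2}) uniformly for z ∈ (0, n^{1/(k(2k+2))}). -/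

import Mathlib

open MeasureTheory Real

/-- The Gibbs measure of the general Curie–Weiss model `CW(ρ)` at inverse
temperature `β = 1`:
`dPₙ(x) = Zₙ⁻¹ exp((1/(2n)) (x₁+⋯+xₙ)²) ∏ᵢ dρ(xᵢ)`. -/
noncomputable def cwMeasure (ρ : Measure ℝ) [IsProbabilityMeasure ρ] (n : ℕ) :
    Measure (Fin n → ℝ) :=
  (Measure.pi fun _ : Fin n => ρ).withDensity fun x =>
    ENNReal.ofReal (Real.exp ((∑ i, x i) ^ 2 / (2 * n)) /
      ∫ y : Fin n → ℝ, Real.exp ((∑ i, y i) ^ 2 / (2 * n))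
        ∂(Measure.pi fun _ : Fin n => ρ))

/-- `h(s) = s²/2 − log ∫ e^{sx} dρ(x)`. -/
noncomputable def hfun (ρ : Measure ℝ) (s : ℝ) : ℝ :=
  s ^ 2 / 2 - Real.log (∫ x, Real.exp (s * x) ∂ρ)

section P1
open ProbabilityTheory

lemma cw_ae_mem (ρ : Measure ℝ) [IsProbabilityMeasure ρ] (L : ℝ) (hL : ρ (Set.Icc (-L) L) = 1) :
    ∀ᵐ x ∂ρ, x ∈ Set.Icc (-L) L := by
  rw [← prob_compl_eq_zero_iff measurableSet_Icc] at hL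
  exact hL

lemma cw_L_nonneg (ρ : Measure ℝ) [IsProbabilityMeasure ρ] (L : ℝ)
    (hL : ρ (Set.Icc (-L) L) = 1) : 0 ≤ L := by
  by_contra h
  rw [Set.Icc_eq_empty (by linarith)] at hL
  simp at hL

lemma cw_intExp (ρ : Measure ℝ) [IsProbabilityMeasure ρ] (L : ℝ)
    (hL : ρ (Set.Icc (-L) L) = 1) (t : ℝ) : Integrable (fun x => Real.exp (t * id x)) ρ :=
  integrable_exp_mul_of_mem_Icc aemeasurable_id (cw_ae_mem ρ L hL)

lemma cw_interior (ρ : Measure ℝ) [IsProbabilityMeasure ρ] (L : ℝ)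
    (hL : ρ (Set.Icc (-L) L) = 1) (t : ℝ) : t ∈ interior (integrableExpSet id ρ) := by
  have : integrableExpSet id ρ = Set.univ := by
    ext s; simpa [integrableExpSet] using cw_intExp ρ L hL s
  simp [this]

lemma cw_hfun_eq (ρ : Measure ℝ) : hfun ρ = fun s => s ^ 2 / 2 - cgf id ρ s := by
  ext s; simp [hfun, cgf, mgf]

lemma cw_contDiff_cgf (ρ : Measure ℝ) [IsProbabilityMeasure ρ] (L : ℝ)
    (hL : ρ (Set.Icc (-L) L) = 1) (m : ℕ) : ContDiff ℝ m (cgf id ρ) := by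
  rw [contDiff_iff_contDiffAt]
  intro s
  exact (analyticAt_cgf (cw_interior ρ L hL s)).contDiffAt

lemma cw_contDiff (ρ : Measure ℝ) [IsProbabilityMeasure ρ] (L : ℝ)
    (hL : ρ (Set.Icc (-L) L) = 1) (m : ℕ) : ContDiff ℝ m (hfun ρ) := by
  rw [cw_hfun_eq]
  exact ((contDiff_id.pow 2).div_const 2).sub (cw_contDiff_cgf ρ L hL m)

noncomputable def cwTilt (ρ : Measure ℝ) (θ : ℝ) : Measure ℝ := ρ.tilted (fun x => θ * id x)

lemma cwTilt_prob (ρ : Measure ℝ) [IsProbabilityMeasure ρ] (L : ℝ)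
    (hL : ρ (Set.Icc (-L) L) = 1) (θ : ℝ) : IsProbabilityMeasure (cwTilt ρ θ) :=
  isProbabilityMeasure_tilted (cw_intExp ρ L hL θ)

lemma cwTilt_ae (ρ : Measure ℝ) [IsProbabilityMeasure ρ] (L : ℝ)
    (hL : ρ (Set.Icc (-L) L) = 1) (θ : ℝ) : ∀ᵐ x ∂(cwTilt ρ θ), x ∈ Set.Icc (-L) L :=
  (tilted_absolutelyContinuous _ _).ae_le (cw_ae_mem ρ L hL)

lemma cw_deriv (ρ : Measure ℝ) [IsProbabilityMeasure ρ] (L : ℝ)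
    (hL : ρ (Set.Icc (-L) L) = 1) (θ : ℝ) :
    deriv (hfun ρ) θ = θ - ∫ x, x ∂(cwTilt ρ θ) := by
  have h1 := integral_tilted_mul_self (X := id) (μ := ρ) (cw_interior ρ L hL θ)
  have h2 : HasDerivAt (cgf id ρ) (deriv (cgf id ρ) θ) θ :=
    ((cw_contDiff_cgf ρ L hL 1).differentiable (by norm_num) θ).hasDerivAt
  have h3 : HasDerivAt (hfun ρ) (θ - deriv (cgf id ρ) θ) θ := by
    rw [cw_hfun_eq]
    have := (((hasDerivAt_id' θ).fun_pow 2).div_const 2).fun_sub h2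
    exact this.congr_deriv (by simp)
  rw [h3.deriv, ← h1]
  rfl

lemma cw_deriv_fun (ρ : Measure ℝ) [IsProbabilityMeasure ρ] (L : ℝ)
    (hL : ρ (Set.Icc (-L) L) = 1) :
    deriv (hfun ρ) = fun θ => θ - deriv (cgf id ρ) θ := by
  ext θ
  rw [cw_deriv ρ L hL, ← integral_tilted_mul_self (X := id) (μ := ρ) (cw_interior ρ L hL θ)]
  rfl

lemma cw_deriv2 (ρ : Measure ℝ) [IsProbabilityMeasure ρ] (L : ℝ)
    (hL : ρ (Set.Icc (-L) L) = 1) (θ : ℝ) :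
    deriv (deriv (hfun ρ)) θ = 1 - ∫ x, (x - ∫ x, x ∂(cwTilt ρ θ)) ^ 2 ∂(cwTilt ρ θ) := by
  have h1 := variance_tilted_mul (X := id) (μ := ρ) (cw_interior ρ L hL θ)
  rw [variance_eq_integral aemeasurable_id, iteratedDeriv_succ, iteratedDeriv_one] at h1
  have h2 : HasDerivAt (deriv (cgf id ρ)) (deriv (deriv (cgf id ρ)) θ) θ := by
    have := (cw_contDiff_cgf ρ L hL 2)
    have := (contDiff_succ_iff_deriv (n := 1)).1 (by exact_mod_cast this)
    exact (this.2.2.differentiable (by norm_num) θ).hasDerivAt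
  rw [cw_deriv_fun ρ L hL, ((hasDerivAt_id' θ).fun_sub h2).deriv, ← h1]
  rfl

/-- Taylor-type bound near zero. -/
lemma cw_taylor (m : ℕ) : ∀ f : ℝ → ℝ, ContDiff ℝ m f → (∀ i < m, iteratedDeriv i f 0 = 0) →
    ∃ C : ℝ, 0 ≤ C ∧ ∀ x, |x| ≤ 1 → |f x| ≤ C * |x| ^ m := by
  induction m with
  | zero =>
    intro f hf _
    obtain ⟨C, hC⟩ := (isCompact_Icc (a := (-1:ℝ)) (b := 1)).exists_bound_of_continuousOn
      hf.continuous.continuousOn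
    refine ⟨C, (norm_nonneg _).trans (hC 0 (by simp)), fun x hx => ?_⟩
    simpa using hC x (abs_le.1 hx)
  | succ m ih =>
    intro f hf h0
    have hf' := (contDiff_succ_iff_deriv (n := m)).1 (by exact_mod_cast hf)
    obtain ⟨C, hC0, hC⟩ := ih (deriv f) hf'.2.2 (fun i hi => by
      rw [← iteratedDeriv_succ']; exact h0 (i+1) (by omega))
    refine ⟨C, hC0, fun x hx => ?_⟩
    have hf0 : f 0 = 0 := by simpa using h0 0 (by omega)
    have := Convex.norm_image_sub_le_of_norm_deriv_le (f := f) (C := C * |x| ^ m)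
      (s := Set.Icc (-|x|) |x|) (x := 0) (y := x) (fun y _ => hf'.1 y) (fun y hy => by
        have hy' : |y| ≤ |x| := abs_le.2 hy
        refine (hC y (hy'.trans hx)).trans ?_
        gcongr) (convex_Icc _ _) (by simp) (by simp [neg_abs_le, le_abs_self])
    simp only [hf0, sub_zero, Real.norm_eq_abs] at this
    rw [pow_succ, ← mul_assoc]; exact this

/-- Structural facts on `h` used in the rest of the proof. -/
structure HFacts (ρ : Measure ℝ) (L : ℝ) (k : ℕ) (a : ℝ) (C c ε : ℝ) : Prop where
  hC : 0 < C
  hc : 0 < c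
  hε : 0 < ε
  ha : 0 < a
  diff : Differentiable ℝ (hfun ρ)
  d1 : ∀ θ, |deriv (hfun ρ) θ| ≤ C * |θ| ^ (2 * k - 1)
  d2 : ∀ θ, |deriv (deriv (hfun ρ)) θ| ≤ C * |θ| ^ (2 * k - 2)
  tay : ∀ θ, |hfun ρ θ - a * θ ^ (2 * k)| ≤ C * |θ| ^ (2 * k + 2)
  low : ∀ θ, 0 ≤ θ → θ ≤ ε → a / 2 * θ ^ (2 * k) ≤ hfun ρ θ
  far : ∀ θ, ε ≤ θ → c * θ ≤ hfun ρ θ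
  even : ∀ θ, hfun ρ (-θ) = hfun ρ θ

lemma cw_even (ρ : Measure ℝ) (hsym : ρ.map (fun x => -x) = ρ) (θ : ℝ) :
    hfun ρ (-θ) = hfun ρ θ := by
  unfold hfun
  have : ∫ x, Real.exp (θ * x) ∂ρ = ∫ x, Real.exp (-θ * x) ∂ρ := by
    conv_lhs => rw [← hsym]
    rw [integral_map (by fun_prop) (by fun_prop)]
    congr with x; ring_nf
  rw [this]; ring_nf

/-- globalize a local bound -/
lemma cw_global (f : ℝ → ℝ) (m : ℕ) (C A : ℝ) (h1 : ∀ x, |x| ≤ 1 → |f x| ≤ C * |x| ^ m)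
    (h2 : ∀ x, 1 ≤ |x| → |f x| ≤ A * |x| ^ m) : ∀ x, |f x| ≤ max C A * |x| ^ m := by
  intro x
  rcases le_total |x| 1 with h | h
  · exact (h1 x h).trans (by gcongr; exact le_max_left _ _)
  · exact (h2 x h).trans (by gcongr; exact le_max_right _ _)

lemma cw_mean_bound (ν : Measure ℝ) [IsProbabilityMeasure ν] (L : ℝ)
    (h : ∀ᵐ x ∂ν, x ∈ Set.Icc (-L) L) : |∫ x, x ∂ν| ≤ L := by
  have := norm_integral_le_of_norm_le_const (μ := ν) (f := fun x => x) (C := L)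
    (by filter_upwards [h] with x hx using abs_le.2 hx)
  simpa using this

lemma cw_var_bound (ν : Measure ℝ) [IsProbabilityMeasure ν] (L m : ℝ) (hm : |m| ≤ L)
    (h : ∀ᵐ x ∂ν, x ∈ Set.Icc (-L) L) : |∫ x, (x - m) ^ 2 ∂ν| ≤ 4 * L ^ 2 := by
  have := norm_integral_le_of_norm_le_const (μ := ν) (f := fun x => (x - m) ^ 2) (C := 4 * L ^ 2)
    (by
      filter_upwards [h] with x hx
      have := abs_le.1 hm
      rw [Real.norm_eq_abs, abs_of_nonneg (sq_nonneg _)]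
      nlinarith [hx.1, hx.2])
  simpa using this

lemma cw_facts (ρ : Measure ℝ) [IsProbabilityMeasure ρ] (L : ℝ) (k : ℕ)
    (hsym : ρ.map (fun x => -x) = ρ)
    (hL : ρ (Set.Icc (-L) L) = 1)
    (hroot : ∀ s : ℝ, deriv (hfun ρ) s = 0 ↔ s = 0)
    (hk : 2 ≤ k)
    (hder : ∀ i : ℕ, i ≤ 2 * k - 1 → iteratedDeriv i (hfun ρ) 0 = 0)
    (hpos : 0 < iteratedDeriv (2 * k) (hfun ρ) 0) :
    ∃ C c ε, HFacts ρ L k (iteratedDeriv (2 * k) (hfun ρ) 0 / (Nat.factorial (2 * k))) C c ε := by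
  have hL0 := cw_L_nonneg ρ L hL
  set a := iteratedDeriv (2 * k) (hfun ρ) 0 / (Nat.factorial (2 * k)) with ha
  have ha0 : 0 < a := by positivity
  have hcd := cw_contDiff ρ L hL
  have hdiff : Differentiable ℝ (hfun ρ) := (hcd 1).differentiable (by norm_num)
  have hcd' : ∀ m : ℕ, ContDiff ℝ m (deriv (hfun ρ)) := fun m =>
    ((contDiff_succ_iff_deriv (n := m)).1 (by exact_mod_cast hcd (m+1))).2.2
  have hcd'' : ∀ m : ℕ, ContDiff ℝ m (deriv (deriv (hfun ρ))) := fun m =>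
    ((contDiff_succ_iff_deriv (n := m)).1 (by exact_mod_cast hcd' (m+1))).2.2
  have hmean : ∀ θ, |∫ x, x ∂(cwTilt ρ θ)| ≤ L := fun θ => by
    have := cwTilt_prob ρ L hL θ
    exact cw_mean_bound _ L (cwTilt_ae ρ L hL θ)
  have hvar : ∀ θ, |∫ x, (x - ∫ x, x ∂(cwTilt ρ θ)) ^ 2 ∂(cwTilt ρ θ)| ≤ 4 * L ^ 2 := fun θ => by
    have := cwTilt_prob ρ L hL θ
    exact cw_var_bound _ L _ (hmean θ) (cwTilt_ae ρ L hL θ)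
  have hD1 : ∀ θ, |deriv (hfun ρ) θ| ≤ |θ| + L := fun θ => by
    rw [cw_deriv ρ L hL]; exact (abs_sub _ _).trans (by linarith [hmean θ])
  have h00 : hfun ρ 0 = 0 := by simpa using hder 0 (by omega)
  have heven := cw_even ρ hsym
  -- first derivative
  obtain ⟨C1, hC1, hb1⟩ := cw_taylor (2 * k - 1) (deriv (hfun ρ)) (hcd' _) (fun i hi => by
    rw [← iteratedDeriv_succ']; exact hder _ (by omega))
  have g1 := cw_global _ _ C1 (1 + L) hb1 (fun x hx => by
    have : |x| ^ 1 ≤ |x| ^ (2 * k - 1) := pow_le_pow_right₀ hx (by omega)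
    rw [pow_one] at this
    nlinarith [hD1 x])
  obtain ⟨C2, hC2, hb2⟩ := cw_taylor (2 * k - 2) (deriv (deriv (hfun ρ))) (hcd'' _) (fun i hi => by
    rw [← iteratedDeriv_succ', ← iteratedDeriv_succ']; exact hder _ (by omega))
  have g2 := cw_global _ _ C2 (1 + 4 * L ^ 2) hb2 (fun x hx => by
    have h1 : 1 ≤ |x| ^ (2 * k - 2) := one_le_pow₀ hx
    rw [cw_deriv2 ρ L hL]
    refine (abs_sub _ _).trans ?_
    have := hvar x
    rw [abs_one]
    nlinarith [sq_nonneg L])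
  -- growth of h
  have hgrow : ∀ θ, |hfun ρ θ| ≤ (|θ| + L) * |θ| := fun θ => by
    have := Convex.norm_image_sub_le_of_norm_deriv_le (f := hfun ρ) (C := |θ| + L)
      (s := Set.Icc (-|θ|) |θ|) (x := 0) (y := θ) (fun y _ => hdiff y) (fun y hy => by
        have hy' : |y| ≤ |θ| := abs_le.2 hy
        exact (hD1 y).trans (by linarith)) (convex_Icc _ _) (by simp)
        (by simp [neg_abs_le, le_abs_self])
    simpa [h00] using this
  have hodd : iteratedDeriv (2 * k + 1) (hfun ρ) 0 = 0 := by
    have h := iteratedDeriv_comp_neg (2 * k + 1) (hfun ρ) 0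
    have h' : (fun x => hfun ρ (-x)) = hfun ρ := funext heven
    rw [h', pow_succ, pow_mul] at h
    simp at h
    linarith
  obtain ⟨C3, hC3, hb3⟩ := cw_taylor (2 * k + 2) (fun θ => hfun ρ θ - a * θ ^ (2 * k))
    ((hcd _).sub (by fun_prop)) (fun i hi => by
      rw [iteratedDeriv_fun_sub ((hcd i).contDiffAt) (by fun_prop),
        iteratedDeriv_const_mul_field, iteratedDeriv_fun_pow_zero]
      split_ifs with h
      · subst h
        rw [ha]; field_simp; simp
      · rcases lt_or_gt_of_ne h with h | h
        · simp [hder i (by omega)]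
        · obtain rfl : i = 2 * k + 1 := by omega
          simp [hodd])
  have g3 := cw_global _ _ C3 (1 + L + a) hb3 (fun x hx => by
    have h1 : |x| ^ 2 ≤ |x| ^ (2 * k + 2) := pow_le_pow_right₀ hx (by omega)
    have h2 : |x| ^ (2 * k) ≤ |x| ^ (2 * k + 2) := pow_le_pow_right₀ hx (by omega)
    refine (abs_sub _ _).trans ?_
    rw [abs_mul, abs_pow, abs_of_pos ha0]
    have h3 : (|x| + L) * |x| ≤ (1 + L) * |x| ^ 2 := by
      have : L * |x| ≤ L * |x| ^ 2 := by gcongr; nlinarith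
      nlinarith [abs_nonneg x]
    nlinarith [hgrow x])
  set C := max (max (max C1 (1 + L)) (max C2 (1 + 4 * L ^ 2))) (max C3 (1 + L + a)) with hC
  have hCa : max C1 (1 + L) ≤ C := (le_max_left _ _).trans (le_max_left _ _)
  have hCb : max C2 (1 + 4 * L ^ 2) ≤ C := (le_max_right _ _).trans (le_max_left _ _)
  have hCc : max C3 (1 + L + a) ≤ C := (le_max_right _ _)
  have hCpos : 0 < C := by
    have : 1 + L + a ≤ C := (le_max_right _ _).trans hCc
    linarith
  -- epsilon
  set ε := min 1 (a / (2 * C)) with hε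
  have hε0 : 0 < ε := by positivity
  have htay : ∀ θ, |hfun ρ θ - a * θ ^ (2 * k)| ≤ C * |θ| ^ (2 * k + 2) := fun θ =>
    (g3 θ).trans (by gcongr)
  have hlow : ∀ θ, 0 ≤ θ → θ ≤ ε → a / 2 * θ ^ (2 * k) ≤ hfun ρ θ := by
    intro θ h0 h1
    have h2 := (abs_le.1 (htay θ)).1
    rw [abs_of_nonneg h0] at h2
    have h3 : θ ^ 2 ≤ a / (2 * C) := by
      have : θ ≤ 1 := h1.trans (min_le_left _ _)
      have : θ ≤ a / (2 * C) := h1.trans (min_le_right _ _)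
      nlinarith
    have h4 : C * θ ^ (2 * k + 2) ≤ a / 2 * θ ^ (2 * k) := by
      have : C * θ ^ 2 ≤ a / 2 := by
        calc C * θ ^ 2 ≤ C * (a / (2 * C)) := by gcongr
          _ = a / 2 := by field_simp
      calc C * θ ^ (2 * k + 2) = (C * θ ^ 2) * θ ^ (2 * k) := by ring
        _ ≤ _ := by gcongr
    linarith
  -- monotone
  have hεpos : 0 < hfun ρ ε := lt_of_lt_of_le (by positivity) (hlow ε hε0.le le_rfl)
  have hdpos : ∀ θ, 0 < θ → 0 < deriv (hfun ρ) θ := by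
    intro θ hθ
    by_contra hneg
    push Not at hneg
    -- derivative is positive for large
    set b := max (θ + 1) (L + 1)
    have hbθ : θ ≤ b := by have := le_max_left (θ + 1) (L + 1); linarith
    have hb : 0 < deriv (hfun ρ) b := by
      rw [cw_deriv ρ L hL]
      have := (abs_le.1 (hmean b)).2
      have := le_max_right (θ + 1) (L + 1)
      linarith
    obtain ⟨s, hs, hs0⟩ := intermediate_value_Icc hbθ (hcd' 0).continuous.continuousOn
      (show (0:ℝ) ∈ Set.Icc _ _ from ⟨hneg, hb.le⟩)
    have := (hroot s).1 hs0
    have := hs.1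
    linarith
  have hmono : MonotoneOn (hfun ρ) (Set.Ici 0) := by
    refine monotoneOn_of_deriv_nonneg (convex_Ici 0) hdiff.continuous.continuousOn
      hdiff.differentiableOn ?_
    intro x hx
    rw [interior_Ici] at hx
    exact (hdpos x hx).le
  -- lower bound by quadratic
  have hquad : ∀ θ, 0 ≤ θ → θ ^ 2 / 2 - L * θ ≤ hfun ρ θ := by
    intro θ hθ
    have hm : mgf id ρ θ ≤ Real.exp (θ * L) := by
      have : ∫ x, Real.exp (θ * id x) ∂ρ ≤ ∫ x, Real.exp (θ * L) ∂ρ := by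
        refine integral_mono_ae (cw_intExp ρ L hL θ) (integrable_const _) ?_
        filter_upwards [cw_ae_mem ρ L hL] with x hx
        exact Real.exp_le_exp.2 (mul_le_mul_of_nonneg_left hx.2 hθ)
      simpa [mgf] using this
    have : cgf id ρ θ ≤ θ * L := by
      rw [cgf, Real.log_le_iff_le_exp (mgf_pos (cw_intExp ρ L hL θ))]
      exact hm
    rw [cw_hfun_eq]
    simp only
    linarith
  refine ⟨C, min 1 (hfun ρ ε / (2 * L + 2)), ε, hCpos, by positivity, hε0, ha0, hdiff,
    fun θ => (g1 θ).trans (by gcongr), fun θ => (g2 θ).trans (by gcongr), htay, hlow, ?_, heven⟩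
  intro θ hθ
  have hθ0 : 0 ≤ θ := hε0.le.trans hθ
  rcases le_total θ (2 * L + 2) with h | h
  · have h1 := hmono (Set.mem_Ici.2 hε0.le) (Set.mem_Ici.2 hθ0) hθ
    calc _ ≤ hfun ρ ε / (2 * L + 2) * (2 * L + 2) := by
          gcongr; exact min_le_right _ _
      _ = hfun ρ ε := by field_simp
      _ ≤ _ := h1
  · calc _ ≤ 1 * θ := by gcongr; exact min_le_left _ _
      _ ≤ θ ^ 2 / 2 - L * θ := by nlinarith
      _ ≤ _ := hquad θ hθ0

end P1

section P2
open ProbabilityTheory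

lemma cw_pi_ae (ν : Measure ℝ) [IsProbabilityMeasure ν] (L : ℝ)
    (h : ∀ᵐ x ∂ν, x ∈ Set.Icc (-L) L) (n : ℕ) :
    ∀ᵐ x ∂(Measure.pi fun _ : Fin n => ν), ∀ i, x i ∈ Set.Icc (-L) L := by
  rw [ae_all_iff]
  intro i
  exact (Measure.tendsto_eval_ae_ae (μ := fun _ : Fin n => ν) (i := i)).eventually h

lemma cw_bdd_int {α : Type*} [MeasurableSpace α] (μ : Measure α) [IsFiniteMeasure μ] (f : α → ℝ)
    (hf : Measurable f) (K : ℝ) (h : ∀ᵐ x ∂μ, |f x| ≤ K) : Integrable f μ :=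
  Integrable.of_bound hf.aestronglyMeasurable K h

lemma cw_stein_coord (ν : Measure ℝ) [IsProbabilityMeasure ν] (L : ℝ) (n : ℕ) (i : Fin n)
    (h : ∀ᵐ x ∂ν, x ∈ Set.Icc (-L) L) (F A B : ℝ → ℝ) (hF : Measurable F)
    (hA : Monotone A) (hB : Monotone B) (K : ℝ) (hFK : ∀ s, |F s| ≤ K) (hAK : ∀ s, |A s| ≤ K)
    (hBK : ∀ s, |B s| ≤ K)
    (hinc : ∀ a b, a ≤ b → F b - F a ≤ (b - a) * (A b - B a)) :
    ∫ x : Fin n → ℝ, (x i - ∫ t, t ∂ν) * F (∑ j, x j) ∂(Measure.pi fun _ => ν) ≤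
      (∫ s, (s - ∫ t, t ∂ν) ^ 2 ∂ν) *
        ∫ x : Fin n → ℝ, (A (∑ j, x j + 2 * L) - B (∑ j, x j - 2 * L)) ∂(Measure.pi fun _ => ν) := by
  set μ := Measure.pi (fun _ : Fin n => ν) with hμ
  set m := ∫ t, t ∂ν with hm
  have hmL : |m| ≤ L := cw_mean_bound ν L h
  have hmL' := abs_le.1 hmL
  have hK : 0 ≤ K := (abs_nonneg _).trans (hFK 0)
  set T : (Fin n → ℝ) → ℝ := fun x => ∑ j ∈ Finset.univ.erase i, x j with hT
  have hTm : Measurable T := by fun_prop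
  have hS : ∀ x : Fin n → ℝ, ∑ j, x j = T x + x i := fun x => by
    rw [hT]; simp only; rw [Finset.sum_erase_add _ _ (Finset.mem_univ i)]
  have hind : IndepFun T (fun x => x i) μ := by
    have h1 : iIndepFun (fun (j : Fin n) (x : Fin n → ℝ) => x j) μ :=
      iIndepFun_pi (X := fun _ => id) (fun _ => aemeasurable_id)
    have := h1.indepFun_finsetSum_of_notMem (fun j => measurable_pi_apply j)
      (Finset.notMem_erase i Finset.univ)
    convert this using 1
    ext x; simp [hT]
  have hmp := measurePreserving_eval (fun _ : Fin n => ν) i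
  have hAm := hA.measurable
  have hBm := hB.measurable
  have hae := cw_pi_ae ν L h n
  have key : ∀ (f g : ℝ → ℝ), Measurable f → Measurable g →
      ∫ x, f (x i) * g (T x) ∂μ = (∫ s, f s ∂ν) * ∫ x, g (T x) ∂μ := by
    intro f g hf hg
    have := (hind.symm).integral_fun_comp_mul_comp (𝕜 := ℝ) (f := f) (g := g)
      (measurable_pi_apply i).aemeasurable hTm.aemeasurable
      hf.aestronglyMeasurable hg.aestronglyMeasurable
    rw [this]
    congr 1
    rw [← hmp.map_eq, integral_map (measurable_pi_apply i).aemeasurable hf.aestronglyMeasurable]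
  have h0 : ∫ x, (x i - m) * F (T x + m) ∂μ = 0 := by
    rw [key (fun s => s - m) (fun t => F (t + m)) (by fun_prop) (by fun_prop)]
    rw [integral_sub (f := fun s => s) (cw_bdd_int ν _ measurable_id L (by
      filter_upwards [h] with x hx using abs_le.2 hx)) (integrable_const _)]
    simp [hm]
  have hb1 : ∀ᵐ x ∂μ, |x i - m| ≤ 2 * L := by
    filter_upwards [hae] with x hx
    have := hx i
    rw [abs_le]; constructor <;> linarith [this.1, this.2]
  have hi1 : ∀ G : (Fin n → ℝ) → ℝ, Measurable G → (∀ x, |G x| ≤ K) →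
      Integrable (fun x => (x i - m) * G x) μ := by
    intro G hG hGK
    refine cw_bdd_int μ _ (by fun_prop) (2 * L * K) ?_
    filter_upwards [hb1] with x hx
    rw [abs_mul]
    exact mul_le_mul hx (hGK x) (abs_nonneg _) ((abs_nonneg _).trans hx)
  have e1 : ∫ x : Fin n → ℝ, (x i - m) * F (∑ j, x j) ∂μ =
      ∫ x, ((x i - m) * F (T x + x i) - (x i - m) * F (T x + m)) ∂μ := by
    rw [integral_sub (hi1 _ (by fun_prop) (fun _ => hFK _)) (hi1 _ (by fun_prop) (fun _ => hFK _)),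
      h0, sub_zero]
    simp_rw [hS]
  have hABi : ∀ p q : (Fin n → ℝ) → ℝ, Measurable p → Measurable q →
      Integrable (fun x => A (p x) - B (q x)) μ := by
    intro p q hp hq
    refine cw_bdd_int μ _ (by fun_prop) (K + K) ?_
    filter_upwards with x
    exact (abs_sub _ _).trans (add_le_add (hAK _) (hBK _))
  have e2 : ∫ x, ((x i - m) * F (T x + x i) - (x i - m) * F (T x + m)) ∂μ ≤
      ∫ x, (x i - m) ^ 2 * (A (T x + L) - B (T x - L)) ∂μ := by
    refine integral_mono_ae ((hi1 _ (by fun_prop) (fun _ => hFK _)).sub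
      (hi1 _ (by fun_prop) (fun _ => hFK _))) ?_ ?_
    · refine cw_bdd_int μ _ (by fun_prop) ((2 * L) ^ 2 * (K + K)) ?_
      filter_upwards [hb1] with x hx
      rw [abs_mul, abs_pow]
      have : |A (T x + L) - B (T x - L)| ≤ K + K :=
        (abs_sub _ _).trans (add_le_add (hAK _) (hBK _))
      gcongr
    · filter_upwards [hae] with x hx
      have hxi := hx i
      have gen : ∀ p q, p ∈ Set.Icc (-L) L → q ∈ Set.Icc (-L) L → p ≤ q →
          F (T x + q) - F (T x + p) ≤ (q - p) * (A (T x + L) - B (T x - L)) := by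
        intro p q hp hq hpq
        refine (hinc _ _ (by linarith)).trans ?_
        have h1 : A (T x + q) ≤ A (T x + L) := hA (by linarith [hq.2])
        have h2 : B (T x - L) ≤ B (T x + p) := hB (by linarith [hp.1])
        rw [add_sub_add_left_eq_sub]
        exact mul_le_mul_of_nonneg_left (by linarith) (by linarith)
      rcases le_total (x i) m with hle | hle
      · have := gen _ _ hxi hmL' hle
        nlinarith
      · have := gen _ _ hmL' hxi hle
        nlinarith
  have hv : 0 ≤ ∫ s, (s - m) ^ 2 ∂ν := integral_nonneg fun _ => sq_nonneg _
  rw [e1]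
  refine e2.trans ?_
  rw [key (fun s => (s - m) ^ 2) (fun t => A (t + L) - B (t - L)) (by fun_prop) (by fun_prop)]
  refine mul_le_mul_of_nonneg_left ?_ hv
  refine integral_mono_ae (hABi _ _ (by fun_prop) (by fun_prop))
    (hABi _ _ (by fun_prop) (by fun_prop)) ?_
  filter_upwards [hae] with x hx
  have hxi := hx i
  rw [hS x]
  have h1 : A (T x + L) ≤ A (T x + x i + 2 * L) := hA (by linarith [hxi.1])
  have h2 : B (T x + x i - 2 * L) ≤ B (T x - L) := hB (by linarith [hxi.2])
  linarith

lemma cw_stein (ν : Measure ℝ) [IsProbabilityMeasure ν] (L : ℝ) (n : ℕ)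
    (h : ∀ᵐ x ∂ν, x ∈ Set.Icc (-L) L) (F A B : ℝ → ℝ) (hF : Measurable F)
    (hA : Monotone A) (hB : Monotone B) (K : ℝ) (hFK : ∀ s, |F s| ≤ K) (hAK : ∀ s, |A s| ≤ K)
    (hBK : ∀ s, |B s| ≤ K)
    (hinc : ∀ a b, a ≤ b → F b - F a ≤ (b - a) * (A b - B a)) :
    ∫ x : Fin n → ℝ, (∑ j, x j - n * ∫ t, t ∂ν) * F (∑ j, x j) ∂(Measure.pi fun _ => ν) ≤
      n * ((∫ s, (s - ∫ t, t ∂ν) ^ 2 ∂ν) *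
        ∫ x : Fin n → ℝ, (A (∑ j, x j + 2 * L) - B (∑ j, x j - 2 * L))
          ∂(Measure.pi fun _ => ν)) := by
  have hmL : |∫ t, t ∂ν| ≤ L := cw_mean_bound ν L h
  have hmL' := abs_le.1 hmL
  have e : ∀ x : Fin n → ℝ, (∑ j, x j - n * ∫ t, t ∂ν) * F (∑ j, x j) =
      ∑ i, (x i - ∫ t, t ∂ν) * F (∑ j, x j) := fun x => by
    rw [← Finset.sum_mul, Finset.sum_sub_distrib]; simp
  simp_rw [e]
  rw [integral_finsetSum]
  · refine (Finset.sum_le_sum fun i _ =>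
      cw_stein_coord ν L n i h F A B hF hA hB K hFK hAK hBK hinc).trans ?_
    simp
  · intro i _
    refine cw_bdd_int _ _ (by fun_prop) (2 * L * K) ?_
    filter_upwards [cw_pi_ae ν L h n] with x hx
    have := hx i
    have h1 : |x i - ∫ t, t ∂ν| ≤ 2 * L := by
      rw [abs_le]; constructor <;> linarith [this.1, this.2]
    rw [abs_mul]
    exact mul_le_mul h1 (hFK _) (abs_nonneg _) ((abs_nonneg _).trans h1)

lemma cw_mgf_pi (ρ : Measure ℝ) [IsProbabilityMeasure ρ] (n : ℕ) (θ : ℝ) :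
    ∫ x : Fin n → ℝ, Real.exp (θ * ∑ j, x j) ∂(Measure.pi fun _ => ρ) =
      (∫ x, Real.exp (θ * x) ∂ρ) ^ n := by
  have := integral_fintype_prod_eq_pow (ι := Fin n) (𝕜 := ℝ) (μ := ρ) (fun x => Real.exp (θ * x))
  simp only [Fintype.card_fin] at this
  rw [← this]
  congr with x
  rw [Finset.mul_sum, Real.exp_sum]

lemma cw_mgf_pos (ρ : Measure ℝ) [IsProbabilityMeasure ρ] (L : ℝ)
    (hL : ρ (Set.Icc (-L) L) = 1) (θ : ℝ) : 0 < ∫ x, Real.exp (θ * x) ∂ρ :=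
  mgf_pos (X := id) (cw_intExp ρ L hL θ)

lemma cw_mgf_eq (ρ : Measure ℝ) [IsProbabilityMeasure ρ] (L : ℝ)
    (hL : ρ (Set.Icc (-L) L) = 1) (n : ℕ) (θ : ℝ) :
    ∫ x : Fin n → ℝ, Real.exp (θ * ∑ j, x j - n * θ ^ 2 / 2) ∂(Measure.pi fun _ => ρ) =
      Real.exp (-n * hfun ρ θ) := by
  simp_rw [Real.exp_sub]
  rw [integral_div, cw_mgf_pi, hfun, ← Real.exp_log (cw_mgf_pos ρ L hL θ), ← Real.exp_nat_mul,
    ← Real.exp_sub, Real.log_exp]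
  congr 1; ring

lemma cw_pi_tilt (ρ : Measure ℝ) [IsProbabilityMeasure ρ] (L : ℝ)
    (hL : ρ (Set.Icc (-L) L) = 1) (n : ℕ) (θ : ℝ) :
    (Measure.pi fun _ : Fin n => cwTilt ρ θ) =
      (Measure.pi fun _ : Fin n => ρ).tilted (fun x => θ * ∑ j, x j) := by
  have := cwTilt_prob ρ L hL θ
  refine Measure.pi_eq fun s hs => ?_
  rw [tilted_apply_eq_ofReal_integral' _ (MeasurableSet.univ_pi hs)]
  simp only [cwTilt]
  simp_rw [fun i => tilted_apply_eq_ofReal_integral' (μ := ρ) (fun x => θ * id x) (hs i)]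
  rw [← ENNReal.ofReal_prod_of_nonneg (fun i _ => integral_nonneg fun x => by positivity)]
  congr 1
  rw [cw_mgf_pi, ← integral_indicator (MeasurableSet.univ_pi hs)]
  have hh : ∀ i : Fin n, ∫ a in s i, Real.exp (θ * id a) / ∫ x, Real.exp (θ * id x) ∂ρ ∂ρ =
      ∫ a, (s i).indicator (fun a => Real.exp (θ * id a) / ∫ x, Real.exp (θ * id x) ∂ρ) a ∂ρ :=
    fun i => (integral_indicator (hs i)).symm
  simp_rw [hh]
  rw [← integral_fintype_prod_eq_prod (𝕜 := ℝ)]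
  congr with x
  by_cases hx : x ∈ Set.univ.pi s
  · rw [Set.indicator_of_mem hx]
    have : ∀ i, x i ∈ s i := fun i => hx i trivial
    rw [Finset.prod_congr rfl (fun i _ => Set.indicator_of_mem (this i) _)]
    rw [Finset.prod_div_distrib, ← Real.exp_sum, ← Finset.mul_sum]
    simp
  · rw [Set.indicator_of_notMem hx]
    simp only [Set.mem_pi, Set.mem_univ, true_imp_iff, not_forall] at hx
    obtain ⟨i, hi⟩ := hx
    exact (Finset.prod_eq_zero (Finset.mem_univ i) (Set.indicator_of_notMem hi _)).symm

lemma cw_tilt_integral (ρ : Measure ℝ) [IsProbabilityMeasure ρ] (L : ℝ)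
    (hL : ρ (Set.Icc (-L) L) = 1) (n : ℕ) (θ : ℝ) (G : (Fin n → ℝ) → ℝ) :
    Real.exp (-n * hfun ρ θ) * ∫ x, G x ∂(Measure.pi fun _ : Fin n => cwTilt ρ θ) =
      ∫ x, Real.exp (θ * ∑ j, x j - n * θ ^ 2 / 2) * G x ∂(Measure.pi fun _ => ρ) := by
  rw [cw_pi_tilt ρ L hL, integral_tilted, ← cw_mgf_eq ρ L hL]
  simp_rw [Real.exp_sub, smul_eq_mul]
  have hpos : 0 < ∫ x : Fin n → ℝ, Real.exp (θ * ∑ j, x j) ∂(Measure.pi fun _ => ρ) := by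
    rw [cw_mgf_pi]; exact pow_pos (cw_mgf_pos ρ L hL θ) n
  rw [← integral_const_mul, integral_div]
  congr with x
  field_simp

/-- Stein inequality, weighted form, at fixed `θ`. -/
lemma cw_stein_theta (ρ : Measure ℝ) [IsProbabilityMeasure ρ] (L : ℝ)
    (hL : ρ (Set.Icc (-L) L) = 1) (n : ℕ) (θ : ℝ) (F A B : ℝ → ℝ) (hF : Measurable F)
    (hA : Monotone A) (hB : Monotone B) (K : ℝ) (hFK : ∀ s, |F s| ≤ K) (hAK : ∀ s, |A s| ≤ K)
    (hBK : ∀ s, |B s| ≤ K)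
    (hinc : ∀ a b, a ≤ b → F b - F a ≤ (b - a) * (A b - B a)) :
    ∫ x : Fin n → ℝ, Real.exp (θ * ∑ j, x j - n * θ ^ 2 / 2) *
        ((∑ j, x j - n * (θ - deriv (hfun ρ) θ)) * F (∑ j, x j)) ∂(Measure.pi fun _ => ρ) ≤
      ∫ x : Fin n → ℝ, Real.exp (θ * ∑ j, x j - n * θ ^ 2 / 2) *
        (n * (1 - deriv (deriv (hfun ρ)) θ) *
          (A (∑ j, x j + 2 * L) - B (∑ j, x j - 2 * L))) ∂(Measure.pi fun _ => ρ) := by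
  have := cwTilt_prob ρ L hL θ
  have h1 := cw_stein (cwTilt ρ θ) L n (cwTilt_ae ρ L hL θ) F A B hF hA hB K hFK hAK hBK hinc
  have e1 : ∫ t, t ∂(cwTilt ρ θ) = θ - deriv (hfun ρ) θ := by
    have := cw_deriv ρ L hL θ; linarith
  have e2 : ∫ s, (s - ∫ t, t ∂(cwTilt ρ θ)) ^ 2 ∂(cwTilt ρ θ) = 1 - deriv (deriv (hfun ρ)) θ := by
    have := cw_deriv2 ρ L hL θ; linarith
  rw [e2, e1, ← mul_assoc, ← integral_const_mul] at h1
  rw [← cw_tilt_integral ρ L hL, ← cw_tilt_integral ρ L hL]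
  exact mul_le_mul_of_nonneg_left h1 (Real.exp_pos _).le

end P2

section P3

noncomputable def gI (N : ℝ) : ℝ := ∫ t : ℝ, Real.exp (-(N / 2) * t ^ 2)
noncomputable def gg (N t : ℝ) : ℝ := Real.exp (-(N / 2) * t ^ 2) / gI N
noncomputable def gA (c s : ℝ) : ℝ := if c ≤ s then 1 else 0
noncomputable def gB (N c s : ℝ) : ℝ := ∫ t, gA c (s + N * t) * gg N t
noncomputable def gF (N c s : ℝ) : ℝ := max (s - c) 0 - ∫ t, max (s + N * t - c) 0 * gg N t

lemma gI_pos {N : ℝ} (hN : 0 < N) : 0 < gI N := by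
  rw [gI, integral_gaussian]; positivity

lemma gg_pos {N : ℝ} (hN : 0 < N) (t : ℝ) : 0 < gg N t := div_pos (Real.exp_pos _) (gI_pos hN)

lemma gg_int {N : ℝ} (hN : 0 < N) : Integrable (gg N) :=
  (integrable_exp_neg_mul_sq (by positivity)).div_const _

lemma gg_meas (N : ℝ) : Measurable (gg N) := by unfold gg; fun_prop

lemma gg_one {N : ℝ} (hN : 0 < N) : ∫ t, gg N t = 1 := by
  simp only [gg]
  rw [integral_div, ← gI, div_self (gI_pos hN).ne']

lemma gg_mul_int {N : ℝ} (hN : 0 < N) : Integrable (fun t => t * gg N t) := by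
  have := (integrable_mul_exp_neg_mul_sq (b := N / 2) (by positivity)).div_const (gI N)
  refine this.congr (Filter.Eventually.of_forall fun t => ?_)
  simp only [gg]; ring

lemma gg_mean {N : ℝ} : ∫ t, t * gg N t = 0 := by
  have h := integral_neg_eq_self (fun t => t * gg N t) (volume : Measure ℝ)
  have e : ∀ t, -t * gg N (-t) = -(t * gg N t) := fun t => by simp [gg]
  simp_rw [e, integral_neg] at h
  linarith

lemma gA_mono (c : ℝ) : Monotone (gA c) := by
  intro a b hab
  unfold gA
  split_ifs <;> first | linarith | norm_num

lemma gA_nonneg (c s : ℝ) : 0 ≤ gA c s := by unfold gA; split_ifs <;> norm_num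
lemma gA_le (c s : ℝ) : gA c s ≤ 1 := by unfold gA; split_ifs <;> norm_num
lemma gA_meas (c : ℝ) : Measurable (gA c) := (gA_mono c).measurable

lemma gB_int {N : ℝ} (hN : 0 < N) (c s : ℝ) : Integrable (fun t => gA c (s + N * t) * gg N t) := by
  refine (gg_int hN).mono' (((gA_meas c).comp (by fun_prop)).mul (gg_meas N)).aestronglyMeasurable ?_
  filter_upwards with t
  rw [Real.norm_eq_abs, abs_of_nonneg (mul_nonneg (gA_nonneg _ _) (gg_pos hN t).le)]
  exact mul_le_of_le_one_left (gg_pos hN t).le (gA_le _ _)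

lemma gB_mono {N : ℝ} (hN : 0 < N) (c : ℝ) : Monotone (gB N c) := by
  intro a b hab
  refine integral_mono (gB_int hN c a) (gB_int hN c b) fun t => ?_
  exact mul_le_mul_of_nonneg_right (gA_mono c (by linarith)) (gg_pos hN t).le

lemma gB_nonneg {N : ℝ} (hN : 0 < N) (c s : ℝ) : 0 ≤ gB N c s :=
  integral_nonneg fun t => mul_nonneg (gA_nonneg _ _) (gg_pos hN t).le

lemma gB_le {N : ℝ} (hN : 0 < N) (c s : ℝ) : gB N c s ≤ 1 := by
  rw [← gg_one hN]
  refine integral_mono (gB_int hN c s) (gg_int hN) fun t => ?_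
  exact mul_le_of_le_one_left (gg_pos hN t).le (gA_le _ _)

lemma gF_int {N : ℝ} (hN : 0 < N) (c s : ℝ) :
    Integrable (fun t => max (s + N * t - c) 0 * gg N t) := by
  refine (((gg_int hN).const_mul |s - c|).add ((gg_mul_int hN).norm.const_mul N)).mono'
    ((by fun_prop : Measurable fun t => max (s + N * t - c) 0).mul
      (gg_meas N)).aestronglyMeasurable ?_
  filter_upwards with t
  have hg := (gg_pos hN t).le
  simp only [Pi.add_apply, Real.norm_eq_abs]
  rw [abs_of_nonneg (mul_nonneg (le_max_right _ _) hg), abs_mul, abs_of_nonneg hg, ← mul_assoc,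
    ← add_mul]
  gcongr
  refine max_le ?_ (by positivity)
  have := le_abs_self (s - c)
  have := mul_le_mul_of_nonneg_left (le_abs_self t) hN.le
  linarith

lemma max_inc_le (c a b : ℝ) (hab : a ≤ b) : max (b - c) 0 - max (a - c) 0 ≤ (b - a) * gA c b := by
  unfold gA
  split_ifs with h
  · rw [max_eq_left (by linarith)]
    have := le_max_left (a - c) 0
    linarith
  · rw [max_eq_right (by linarith), max_eq_right (by linarith)]
    simp

lemma max_inc_ge (c a b : ℝ) (hab : a ≤ b) : (b - a) * gA c a ≤ max (b - c) 0 - max (a - c) 0 := by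
  unfold gA
  split_ifs with h
  · rw [max_eq_left (by linarith), max_eq_left (by linarith)]
    linarith
  · rw [max_eq_right (b := 0) (a := a - c) (by linarith)]
    simp

lemma gF2_inc {N : ℝ} (hN : 0 < N) (c a b : ℝ) (hab : a ≤ b) :
    (b - a) * gB N c a ≤
      (∫ t, max (b + N * t - c) 0 * gg N t) - (∫ t, max (a + N * t - c) 0 * gg N t) ∧
    (∫ t, max (b + N * t - c) 0 * gg N t) - (∫ t, max (a + N * t - c) 0 * gg N t) ≤
      (b - a) * gB N c b := by
  rw [← integral_sub (gF_int hN c b) (gF_int hN c a), gB, gB, ← integral_const_mul,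
    ← integral_const_mul]
  constructor
  · refine integral_mono ((gB_int hN c a).const_mul _) ((gF_int hN c b).sub (gF_int hN c a))
      fun t => ?_
    have := mul_le_mul_of_nonneg_right
      (max_inc_ge c (a + N * t) (b + N * t) (by linarith)) (gg_pos hN t).le
    simp only
    linarith
  · refine integral_mono ((gF_int hN c b).sub (gF_int hN c a)) ((gB_int hN c b).const_mul _)
      fun t => ?_
    have := mul_le_mul_of_nonneg_right
      (max_inc_le c (a + N * t) (b + N * t) (by linarith)) (gg_pos hN t).le
    simp only
    linarith

lemma gF_inc {N : ℝ} (hN : 0 < N) (c a b : ℝ) (hab : a ≤ b) :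
    gF N c b - gF N c a ≤ (b - a) * (gA c b - gB N c a) := by
  have h1 := max_inc_le c a b hab
  have h2 := (gF2_inc hN c a b hab).1
  unfold gF
  linarith

lemma gF_inc' {N : ℝ} (hN : 0 < N) (c a b : ℝ) (hab : a ≤ b) :
    -gF N c b - -gF N c a ≤ (b - a) * (gB N c b - gA c a) := by
  have h1 := max_inc_ge c a b hab
  have h2 := (gF2_inc hN c a b hab).2
  unfold gF
  linarith

lemma gF_cont {N : ℝ} (hN : 0 < N) (c : ℝ) : Continuous (gF N c) := by
  have key : ∀ a b, a ≤ b → |gF N c b - gF N c a| ≤ b - a := by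
    intro a b hab
    have h1 := gF_inc hN c a b hab
    have h2 := gF_inc' hN c a b hab
    have h3 : (b - a) * (gA c b - gB N c a) ≤ (b - a) * 1 :=
      mul_le_mul_of_nonneg_left (by linarith [gA_le c b, gB_nonneg hN c a]) (by linarith)
    have h4 : (b - a) * (gB N c b - gA c a) ≤ (b - a) * 1 :=
      mul_le_mul_of_nonneg_left (by linarith [gB_le hN c b, gA_nonneg c a]) (by linarith)
    rw [abs_le]; constructor <;> linarith
  have : LipschitzWith 1 (gF N c) := by
    refine LipschitzWith.of_dist_le_mul fun x y => ?_
    rw [Real.dist_eq, Real.dist_eq, NNReal.coe_one, one_mul]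
    rcases le_total x y with h | h
    · rw [abs_sub_comm, abs_sub_comm x y, abs_of_nonneg (by linarith : 0 ≤ y - x)]
      exact key x y h
    · rw [abs_of_nonneg (by linarith : 0 ≤ x - y)]
      exact key y x h
  exact this.continuous

/-- key pointwise shift bound -/
lemma gg_shift {N : ℝ} (hN : 0 < N) (d t : ℝ) (h : 0 ≤ -d * (t + d / N)) :
    gg N t ≤ Real.exp (-d ^ 2 / (2 * N)) * gg N (t + d / N) := by
  unfold gg
  rw [mul_div_assoc', ← Real.exp_add]
  have := gI_pos hN
  gcongr
  have e : -(N / 2) * t ^ 2 = -d ^ 2 / (2 * N) + -(N / 2) * (t + d / N) ^ 2 + d * (t + d / N) := by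
    field_simp; ring
  rw [e]; linarith

lemma gA_sub_gB {N : ℝ} (hN : 0 < N) (c s : ℝ) :
    |gA c s - gB N c s| ≤ Real.exp (-(s - c) ^ 2 / (2 * N)) := by
  set d := s - c with hd
  have hR : ∫ t, Real.exp (-d ^ 2 / (2 * N)) * gg N (t + d / N) = Real.exp (-d ^ 2 / (2 * N)) := by
    rw [integral_const_mul, integral_add_right_eq_self (gg N), gg_one hN, mul_one]
  have hRi : Integrable fun t => Real.exp (-d ^ 2 / (2 * N)) * gg N (t + d / N) :=
    ((gg_int hN).comp_add_right _).const_mul _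
  rw [← hR]
  have hnn : ∀ t, 0 ≤ Real.exp (-d ^ 2 / (2 * N)) * gg N (t + d / N) := fun t =>
    mul_nonneg (Real.exp_pos _).le (gg_pos hN _).le
  have hNt : ∀ t, s + N * t - c = N * (t + d / N) := fun t => by rw [hd]; field_simp; ring
  by_cases h0 : c ≤ s
  · have e : gA c s - gB N c s = ∫ t, (1 - gA c (s + N * t)) * gg N t := by
      simp_rw [sub_mul, one_mul]
      rw [integral_sub (gg_int hN) (gB_int hN c s), gg_one hN, gA, if_pos h0]; rfl
    rw [e, abs_of_nonneg (integral_nonneg fun t =>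
      mul_nonneg (by linarith [gA_le c (s + N * t)]) (gg_pos hN t).le)]
    refine integral_mono ?_ hRi fun t => ?_
    · simp_rw [sub_mul, one_mul]; exact (gg_int hN).sub (gB_int hN c s)
    · simp only [gA]
      split_ifs with h
      · simpa using hnn t
      · simp only [sub_zero, one_mul]
        refine gg_shift hN d t ?_
        have h1 : t + d / N ≤ 0 := by
          by_contra hc
          push Not at hc h
          have := hNt t
          nlinarith [mul_pos hN hc]
        nlinarith
  · have e : gA c s - gB N c s = -∫ t, gA c (s + N * t) * gg N t := by
      rw [gA, if_neg h0, zero_sub]; rfl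
    rw [e, abs_neg, abs_of_nonneg (show 0 ≤ ∫ t, gA c (s + N * t) * gg N t from gB_nonneg hN c s)]
    refine integral_mono (gB_int hN c s) hRi fun t => ?_
    simp only [gA]
    split_ifs with h
    · simp only [one_mul]
      refine gg_shift hN d t ?_
      have h1 : 0 ≤ t + d / N := by
        by_contra hc
        push Not at hc
        have := hNt t
        nlinarith [mul_pos hN (neg_pos.2 hc)]
      nlinarith
    · simpa using hnn t

lemma gI_eq {N : ℝ} : gI N = √(2 * π / N) := by
  rw [gI, integral_gaussian]
  congr 1
  rw [div_div_eq_mul_div]; ring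

lemma gg_abs_bound {N : ℝ} (hN : 0 < N) :
    Integrable (fun t => N * |t| * gg N t) ∧ ∫ t, N * |t| * gg N t ≤ 2 * √N := by
  have hi : Integrable (fun t => N * |t| * gg N t) := by
    refine ((gg_mul_int hN).norm.const_mul N).congr (Filter.Eventually.of_forall fun t => ?_)
    simp only [Real.norm_eq_abs, abs_mul, abs_of_pos (gg_pos hN t)]
    ring
  refine ⟨hi, ?_⟩
  have hs : 0 < √N := Real.sqrt_pos.2 hN
  have hsq : √N * √N = N := Real.mul_self_sqrt hN.le
  have hI : gI (N / 2) = √2 * gI N := by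
    rw [gI_eq, gI_eq, ← Real.sqrt_mul (by norm_num)]
    congr 1; field_simp
  have hb : ∀ t, N * |t| * gg N t ≤ √N * (√2 * gg (N / 2) t) := by
    intro t
    have hx : √N * |t| ≤ Real.exp (N / 4 * t ^ 2) := by
      have h1 := Real.add_one_le_exp (N / 4 * t ^ 2)
      have h2 : √N * |t| ≤ N / 4 * t ^ 2 + 1 := by
        have : (√N * |t|) ^ 2 = N * t ^ 2 := by rw [mul_pow, sq_abs, Real.sq_sqrt hN.le]
        nlinarith [sq_nonneg (√N * |t| - 2)]
      linarith
    have h3 : √2 * gg (N / 2) t = Real.exp (-(N / 4) * t ^ 2) / gI N := by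
      unfold gg
      rw [hI]
      have := gI_pos hN
      have h2 : 0 < √2 := by positivity
      field_simp
      congr 1; ring
    have h4 : gg N t = Real.exp (-(N / 4) * t ^ 2) / gI N * Real.exp (-(N / 4 * t ^ 2)) := by
      unfold gg
      rw [div_mul_eq_mul_div, ← Real.exp_add]
      congr 2; ring
    have hp : 0 ≤ Real.exp (-(N / 4) * t ^ 2) / gI N := div_nonneg (Real.exp_pos _).le (gI_pos hN).le
    rw [h3, h4]
    calc N * |t| * (Real.exp (-(N / 4) * t ^ 2) / gI N * Real.exp (-(N / 4 * t ^ 2)))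
        = √N * (Real.exp (-(N / 4) * t ^ 2) / gI N) *
          ((√N * |t|) * Real.exp (-(N / 4 * t ^ 2))) := by
          linear_combination (-|t| * (Real.exp (-(N / 4) * t ^ 2) / gI N *
            Real.exp (-(N / 4 * t ^ 2)))) * hsq
      _ ≤ √N * (Real.exp (-(N / 4) * t ^ 2) / gI N) *
          (Real.exp (N / 4 * t ^ 2) * Real.exp (-(N / 4 * t ^ 2))) := by gcongr
      _ = _ := by rw [← Real.exp_add]; simp
  calc ∫ t, N * |t| * gg N t ≤ ∫ t, √N * (√2 * gg (N / 2) t) :=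
        integral_mono hi (((gg_int (half_pos hN)).const_mul _).const_mul _) hb
    _ = √N * √2 := by
        rw [integral_const_mul, integral_const_mul, gg_one (half_pos hN), mul_one]
    _ ≤ 2 * √N := by
        have : √2 ≤ 2 := by rw [Real.sqrt_le_left (by norm_num)]; norm_num
        nlinarith

lemma gF_bound {N : ℝ} (hN : 0 < N) (c s : ℝ) :
    |gF N c s| ≤ 2 * √N * Real.exp (-(s - c) ^ 2 / (2 * N)) := by
  set d := s - c with hd
  obtain ⟨hi, hb⟩ := gg_abs_bound hN
  have hR : ∫ t, Real.exp (-d ^ 2 / (2 * N)) * (N * |t + d / N| * gg N (t + d / N)) ≤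
      2 * √N * Real.exp (-d ^ 2 / (2 * N)) := by
    rw [integral_const_mul, integral_add_right_eq_self (fun t => N * |t| * gg N t), mul_comm]
    gcongr
  have hRi : Integrable fun t =>
      Real.exp (-d ^ 2 / (2 * N)) * (N * |t + d / N| * gg N (t + d / N)) :=
    (hi.comp_add_right (d / N)).const_mul _
  refine le_trans ?_ hR
  have hnn : ∀ t, 0 ≤ Real.exp (-d ^ 2 / (2 * N)) * (N * |t + d / N| * gg N (t + d / N)) := fun t =>
    mul_nonneg (Real.exp_pos _).le (mul_nonneg (by positivity) (gg_pos hN _).le)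
  have hNt : ∀ t, s + N * t - c = N * (t + d / N) := fun t => by rw [hd]; field_simp; ring
  have hcomb : ∀ t, 0 ≤ -d * (t + d / N) → N * |t + d / N| * gg N t ≤
      Real.exp (-d ^ 2 / (2 * N)) * (N * |t + d / N| * gg N (t + d / N)) := by
    intro t ht
    have := mul_le_mul_of_nonneg_left (gg_shift hN d t ht) (show 0 ≤ N * |t + d / N| by positivity)
    linarith
  by_cases h0 : c ≤ s
  · have hlin : Integrable fun t => (s + N * t - c) * gg N t := by
      refine (((gg_int hN).const_mul d).add ((gg_mul_int hN).const_mul N)).congr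
        (Filter.Eventually.of_forall fun t => ?_)
      simp only [Pi.add_apply, hd]; ring
    have hlin1 : ∫ t, (s + N * t - c) * gg N t = d := by
      have : ∀ t, (s + N * t - c) * gg N t = d * gg N t + N * (t * gg N t) := fun t => by
        rw [hd]; ring
      simp_rw [this]
      rw [integral_add ((gg_int hN).const_mul d) ((gg_mul_int hN).const_mul N), integral_const_mul,
        integral_const_mul, gg_one hN, gg_mean]
      ring
    have e : gF N c s = -∫ t, (max (s + N * t - c) 0 * gg N t - (s + N * t - c) * gg N t) := by
      rw [integral_sub (gF_int hN c s) hlin, hlin1, gF, max_eq_left (by linarith)]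
      ring
    have hle : ∀ t, 0 ≤ max (s + N * t - c) 0 * gg N t - (s + N * t - c) * gg N t := fun t => by
      rw [← sub_mul]
      exact mul_nonneg (by linarith [le_max_left (s + N * t - c) 0]) (gg_pos hN t).le
    rw [e, abs_neg, abs_of_nonneg (integral_nonneg hle)]
    refine integral_mono ((gF_int hN c s).sub hlin) hRi fun t => ?_
    simp only
    rcases le_total 0 (t + d / N) with h | h
    · rw [max_eq_left (by rw [hNt]; positivity), sub_self]; exact hnn t
    · rw [max_eq_right (by rw [hNt]; nlinarith), hNt, zero_mul, zero_sub]
      refine le_trans (le_of_eq ?_) (hcomb t (by nlinarith))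
      rw [abs_of_nonpos h]; ring
  · have e : gF N c s = -∫ t, max (s + N * t - c) 0 * gg N t := by
      rw [gF, max_eq_right (by linarith), zero_sub]
    rw [e, abs_neg, abs_of_nonneg (integral_nonneg fun t =>
      mul_nonneg (le_max_right _ _) (gg_pos hN t).le)]
    refine integral_mono (gF_int hN c s) hRi fun t => ?_
    simp only
    rcases le_total 0 (t + d / N) with h | h
    · rw [max_eq_left (by rw [hNt]; positivity), hNt]
      refine le_trans (le_of_eq ?_) (hcomb t (by nlinarith))
      rw [abs_of_nonneg h]
    · rw [max_eq_right (by rw [hNt]; nlinarith), zero_mul]; exact hnn t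

/-- completing the square -/
lemma gB_theta {N : ℝ} (hN : 0 < N) (c s : ℝ) :
    ∫ θ, Real.exp (θ * s - N * θ ^ 2 / 2) * gA c (N * θ) =
      gI N * Real.exp (s ^ 2 / (2 * N)) * gB N c s := by
  rw [← integral_add_right_eq_self _ (s / N), gB, ← integral_const_mul]
  congr with t
  have e1 : N * (t + s / N) = s + N * t := by field_simp; ring
  have e2 : Real.exp ((t + s / N) * s - N * (t + s / N) ^ 2 / 2) =
      Real.exp (s ^ 2 / (2 * N)) * Real.exp (-(N / 2) * t ^ 2) := by
    rw [← Real.exp_add]; congr 1; field_simp; ring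
  rw [e1, e2, gg]
  have := gI_pos hN
  field_simp

lemma gauss_theta {N : ℝ} (hN : 0 < N) (s : ℝ) :
    ∫ θ, Real.exp (θ * s - N * θ ^ 2 / 2) = gI N * Real.exp (s ^ 2 / (2 * N)) := by
  rw [← integral_add_right_eq_self _ (s / N), gI, ← integral_mul_const]
  congr with t
  rw [← Real.exp_add]; congr 1; field_simp; ring

lemma gauss_theta_int {N : ℝ} (hN : 0 < N) (s : ℝ) :
    Integrable fun θ => Real.exp (θ * s - N * θ ^ 2 / 2) := by
  have h := ((integrable_exp_neg_mul_sq (b := N / 2) (by positivity)).comp_add_right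
    (-(s / N))).const_mul (Real.exp (s ^ 2 / (2 * N)))
  refine h.congr (Filter.Eventually.of_forall fun t => ?_)
  simp only
  rw [← Real.exp_add]; congr 1; field_simp; ring

/-- first moment identity -/
lemma gauss_theta_mean {N : ℝ} (hN : 0 < N) (s : ℝ) :
    ∫ θ, Real.exp (θ * s - N * θ ^ 2 / 2) * (s - N * θ) = 0 := by
  rw [← integral_add_right_eq_self _ (s / N)]
  have : ∀ t, Real.exp ((t + s / N) * s - N * (t + s / N) ^ 2 / 2) * (s - N * (t + s / N)) =
      (-N * Real.exp (s ^ 2 / (2 * N)) * gI N) * (t * gg N t) := by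
    intro t
    have e2 : Real.exp ((t + s / N) * s - N * (t + s / N) ^ 2 / 2) =
        Real.exp (s ^ 2 / (2 * N)) * Real.exp (-(N / 2) * t ^ 2) := by
      rw [← Real.exp_add]; congr 1; field_simp; ring
    rw [e2, gg]
    have := gI_pos hN
    field_simp
    ring
  simp_rw [this]
  rw [integral_const_mul, gg_mean, mul_zero]

end P3

section P4

/-- law of the total spin under the product measure -/
noncomputable def cwS (ρ : Measure ℝ) (n : ℕ) : Measure ℝ :=
  (Measure.pi fun _ : Fin n => ρ).map (fun x => ∑ j, x j)

lemma cwS_meas (n : ℕ) : Measurable (fun x : Fin n → ℝ => ∑ j, x j) := by fun_prop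

lemma cwS_prob (ρ : Measure ℝ) [IsProbabilityMeasure ρ] (n : ℕ) :
    IsProbabilityMeasure (cwS ρ n) :=
  Measure.isProbabilityMeasure_map (cwS_meas n).aemeasurable

lemma cwS_integral (ρ : Measure ℝ) [IsProbabilityMeasure ρ] (n : ℕ) (f : ℝ → ℝ)
    (hf : Measurable f) :
    ∫ s, f s ∂(cwS ρ n) = ∫ x : Fin n → ℝ, f (∑ j, x j) ∂(Measure.pi fun _ => ρ) :=
  integral_map (cwS_meas n).aemeasurable hf.aestronglyMeasurable

lemma cwS_ae (ρ : Measure ℝ) [IsProbabilityMeasure ρ] (L : ℝ)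
    (hL : ρ (Set.Icc (-L) L) = 1) (n : ℕ) : ∀ᵐ s ∂(cwS ρ n), |s| ≤ n * L := by
  have h1 := cw_pi_ae ρ L (cw_ae_mem ρ L hL) n
  rw [cwS, ae_map_iff (cwS_meas n).aemeasurable (measurableSet_le (by fun_prop) (by fun_prop))]
  filter_upwards [h1] with x hx
  calc |∑ j, x j| ≤ ∑ j, |x j| := Finset.abs_sum_le_sum_abs _ _
    _ ≤ ∑ _j : Fin n, L := Finset.sum_le_sum fun j _ => abs_le.2 (hx j)
    _ = n * L := by simp

lemma cwS_mgf (ρ : Measure ℝ) [IsProbabilityMeasure ρ] (L : ℝ)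
    (hL : ρ (Set.Icc (-L) L) = 1) (n : ℕ) (θ : ℝ) :
    ∫ s, Real.exp (θ * s - n * θ ^ 2 / 2) ∂(cwS ρ n) = Real.exp (-n * hfun ρ θ) := by
  rw [cwS_integral ρ n (fun s => Real.exp (θ * s - n * θ ^ 2 / 2)) (by fun_prop),
    cw_mgf_eq ρ L hL]

lemma cwS_stein (ρ : Measure ℝ) [IsProbabilityMeasure ρ] (L : ℝ)
    (hL : ρ (Set.Icc (-L) L) = 1) (n : ℕ) (θ : ℝ) (F A B : ℝ → ℝ) (hF : Measurable F)
    (hA : Monotone A) (hB : Monotone B) (K : ℝ) (hFK : ∀ s, |F s| ≤ K) (hAK : ∀ s, |A s| ≤ K)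
    (hBK : ∀ s, |B s| ≤ K)
    (hinc : ∀ a b, a ≤ b → F b - F a ≤ (b - a) * (A b - B a)) :
    ∫ s, Real.exp (θ * s - n * θ ^ 2 / 2) *
        ((s - n * (θ - deriv (hfun ρ) θ)) * F s) ∂(cwS ρ n) ≤
      ∫ s, Real.exp (θ * s - n * θ ^ 2 / 2) *
        (n * (1 - deriv (deriv (hfun ρ)) θ) * (A (s + 2 * L) - B (s - 2 * L))) ∂(cwS ρ n) := by
  have hAm := hA.measurable
  have hBm := hB.measurable
  rw [cwS_integral ρ n (fun s => Real.exp (θ * s - n * θ ^ 2 / 2) *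
        ((s - n * (θ - deriv (hfun ρ) θ)) * F s)) (by fun_prop),
    cwS_integral ρ n (fun s => Real.exp (θ * s - n * θ ^ 2 / 2) *
        (n * (1 - deriv (deriv (hfun ρ)) θ) * (A (s + 2 * L) - B (s - 2 * L)))) (by fun_prop)]
  exact cw_stein_theta ρ L hL n θ F A B hF hA hB K hFK hAK hBK hinc

/-- weight -/
noncomputable def cwW (N : ℝ) (p : ℝ × ℝ) : ℝ := Real.exp (p.2 * p.1 - N * p.2 ^ 2 / 2)

/-- weighted double integral -/
noncomputable def cwQ (σ : Measure ℝ) (N : ℝ) (G : ℝ × ℝ → ℝ) : ℝ :=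
  ∫ p, cwW N p * G p ∂(σ.prod volume)

lemma cwW_meas (N : ℝ) : Measurable (cwW N) := by unfold cwW; fun_prop

lemma cwW_pos (N : ℝ) (p : ℝ × ℝ) : 0 < cwW N p := Real.exp_pos _

/-- admissible integrands -/
structure Adm (M : ℝ) (G : ℝ × ℝ → ℝ) : Prop where
  meas : Measurable G
  bd : ∃ D E : ℝ, 0 ≤ D ∧ 0 ≤ E ∧ ∀ s θ, |s| ≤ M → |G (s, θ)| ≤ D * Real.exp (E * |θ|)

lemma Adm.mul {M : ℝ} {G G' : ℝ × ℝ → ℝ} (h : Adm M G) (h' : Adm M G') :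
    Adm M (fun p => G p * G' p) := by
  obtain ⟨D, E, hD, hE, hb⟩ := h.bd
  obtain ⟨D', E', hD', hE', hb'⟩ := h'.bd
  refine ⟨h.meas.mul h'.meas, D * D', E + E', by positivity, by positivity, fun s θ hs => ?_⟩
  rw [abs_mul, add_mul, Real.exp_add]
  calc _ ≤ (D * Real.exp (E * |θ|)) * (D' * Real.exp (E' * |θ|)) := by
        gcongr
        · exact hb s θ hs
        · exact hb' s θ hs
    _ = _ := by ring

lemma Adm.add {M : ℝ} {G G' : ℝ × ℝ → ℝ} (h : Adm M G) (h' : Adm M G') :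
    Adm M (fun p => G p + G' p) := by
  obtain ⟨D, E, hD, hE, hb⟩ := h.bd
  obtain ⟨D', E', hD', hE', hb'⟩ := h'.bd
  refine ⟨h.meas.add h'.meas, D + D', E + E', by positivity, by positivity, fun s θ hs => ?_⟩
  refine (abs_add_le _ _).trans ?_
  rw [add_mul D D']
  have h1 := hb s θ hs
  have h2 := hb' s θ hs
  have h3 : D * Real.exp (E * |θ|) ≤ D * Real.exp ((E + E') * |θ|) := by
    gcongr; linarith
  have h4 : D' * Real.exp (E' * |θ|) ≤ D' * Real.exp ((E + E') * |θ|) := by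
    gcongr; linarith
  linarith

lemma Adm.const {M : ℝ} (c : ℝ) : Adm M (fun _ => c) :=
  ⟨measurable_const, |c|, 0, by positivity, le_rfl, fun s θ hs => by simp⟩

lemma Adm.neg {M : ℝ} {G : ℝ × ℝ → ℝ} (h : Adm M G) : Adm M (fun p => - G p) := by
  have := (Adm.const (M := M) (-1)).mul h
  simpa using this

lemma Adm.sub {M : ℝ} {G G' : ℝ × ℝ → ℝ} (h : Adm M G) (h' : Adm M G') :
    Adm M (fun p => G p - G' p) := by
  simpa [sub_eq_add_neg] using h.add h'.neg

lemma Adm.fst_bdd {M : ℝ} {f : ℝ → ℝ} (hf : Measurable f) (K : ℝ) (hK : ∀ s, |s| ≤ M → |f s| ≤ K) :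
    Adm M (fun p => f p.1) :=
  ⟨by fun_prop, |K|, 0, by positivity, le_rfl, fun s θ hs => by
    simpa using (hK s hs).trans (le_abs_self K)⟩

lemma Adm.snd_poly {M : ℝ} {f : ℝ → ℝ} (hf : Measurable f) (K : ℝ) (j : ℕ)
    (hK : ∀ θ, |f θ| ≤ K * |θ| ^ j) : Adm M (fun p => f p.2) := by
  refine ⟨by fun_prop, |K| * j.factorial, 1, by positivity, by norm_num, fun s θ hs => ?_⟩
  have h1 := Real.pow_div_factorial_le_exp |θ| (abs_nonneg _) j
  rw [div_le_iff₀ (by positivity)] at h1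
  calc |f θ| ≤ K * |θ| ^ j := hK θ
    _ ≤ |K| * |θ| ^ j := by gcongr; exact le_abs_self K
    _ ≤ |K| * (Real.exp |θ| * j.factorial) := by gcongr
    _ = _ := by rw [one_mul]; ring

lemma Adm.expl {M : ℝ} (l y : ℝ) : Adm M (fun p => Real.exp (l * (p.2 - y))) := by
  refine ⟨by fun_prop, Real.exp (|l| * |y|), |l|, by positivity, by positivity, fun s θ hs => ?_⟩
  rw [abs_of_pos (Real.exp_pos _), ← Real.exp_add]
  gcongr
  calc l * (θ - y) ≤ |l * (θ - y)| := le_abs_self _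
    _ = |l| * |θ - y| := abs_mul _ _
    _ ≤ |l| * (|θ| + |y|) := by gcongr; exact abs_sub _ _
    _ = _ := by ring

lemma Adm.congr {M : ℝ} {G G' : ℝ × ℝ → ℝ} (h : Adm M G) (e : ∀ p, G p = G' p) : Adm M G' := by
  have : G = G' := funext e
  rwa [← this]

lemma Adm.integrable {M : ℝ} {G : ℝ × ℝ → ℝ} (h : Adm M G) (σ : Measure ℝ)
    [IsProbabilityMeasure σ] (hσ : ∀ᵐ s ∂σ, |s| ≤ M) {N : ℝ} (hN : 0 < N) :
    Integrable (fun p => cwW N p * G p) (σ.prod volume) := by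
  obtain ⟨D, E, hD, hE, hb⟩ := h.bd
  have hM : ∀ᵐ p ∂(σ.prod (volume : Measure ℝ)), |p.1| ≤ M :=
    Measure.quasiMeasurePreserving_fst.ae hσ
  have hi : Integrable (fun θ : ℝ => D * (Real.exp (θ * (M + E) - N * θ ^ 2 / 2) +
      Real.exp (θ * (-(M + E)) - N * θ ^ 2 / 2))) :=
    ((gauss_theta_int hN _).add (gauss_theta_int hN _)).const_mul D
  refine (hi.comp_snd σ).mono' ((cwW_meas N).mul h.meas).aestronglyMeasurable ?_
  filter_upwards [hM] with p hp
  obtain ⟨s, θ⟩ := p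
  have h1 := hb s θ hp
  simp only at hp ⊢
  rw [Real.norm_eq_abs, abs_mul, abs_of_pos (cwW_pos N _), cwW]
  simp only
  have hM0 : 0 ≤ M := (abs_nonneg s).trans hp
  have h2 : θ * s - N * θ ^ 2 / 2 + E * |θ| ≤ |θ| * (M + E) - N * θ ^ 2 / 2 := by
    have : θ * s ≤ |θ| * M := by
      calc θ * s ≤ |θ * s| := le_abs_self _
        _ = |θ| * |s| := abs_mul _ _
        _ ≤ |θ| * M := by gcongr
    linarith
  calc Real.exp (θ * s - N * θ ^ 2 / 2) * |G (s, θ)|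
      ≤ Real.exp (θ * s - N * θ ^ 2 / 2) * (D * Real.exp (E * |θ|)) := by gcongr
    _ = D * Real.exp (θ * s - N * θ ^ 2 / 2 + E * |θ|) := by rw [Real.exp_add]; ring
    _ ≤ D * Real.exp (|θ| * (M + E) - N * θ ^ 2 / 2) := by gcongr
    _ ≤ _ := by
      gcongr
      rcases abs_cases θ with ⟨e, _⟩ | ⟨e, _⟩
      · rw [e]; linarith [Real.exp_pos (θ * (-(M + E)) - N * θ ^ 2 / 2)]
      · rw [e, show -θ * (M + E) = θ * (-(M + E)) by ring]
        linarith [Real.exp_pos (θ * (M + E) - N * θ ^ 2 / 2)]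

variable {M N : ℝ} {G G' : ℝ × ℝ → ℝ} (σ : Measure ℝ) [IsProbabilityMeasure σ]

lemma cwQ_add (hσ : ∀ᵐ s ∂σ, |s| ≤ M) (hN : 0 < N) (h : Adm M G) (h' : Adm M G') :
    cwQ σ N (fun p => G p + G' p) = cwQ σ N G + cwQ σ N G' := by
  unfold cwQ
  rw [← integral_add (h.integrable σ hσ hN) (h'.integrable σ hσ hN)]
  congr with p; ring

lemma cwQ_sub (hσ : ∀ᵐ s ∂σ, |s| ≤ M) (hN : 0 < N) (h : Adm M G) (h' : Adm M G') :
    cwQ σ N (fun p => G p - G' p) = cwQ σ N G - cwQ σ N G' := by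
  unfold cwQ
  rw [← integral_sub (h.integrable σ hσ hN) (h'.integrable σ hσ hN)]
  congr with p; ring

lemma cwQ_const_mul (c : ℝ) : cwQ σ N (fun p => c * G p) = c * cwQ σ N G := by
  unfold cwQ
  rw [← integral_const_mul]
  congr with p; ring

lemma cwQ_mono (hσ : ∀ᵐ s ∂σ, |s| ≤ M) (hN : 0 < N) (h : Adm M G) (h' : Adm M G')
    (hle : ∀ s θ, |s| ≤ M → G (s, θ) ≤ G' (s, θ)) : cwQ σ N G ≤ cwQ σ N G' := by
  refine integral_mono_ae (h.integrable σ hσ hN) (h'.integrable σ hσ hN) ?_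
  have hM : ∀ᵐ p ∂(σ.prod (volume : Measure ℝ)), |p.1| ≤ M :=
    Measure.quasiMeasurePreserving_fst.ae hσ
  filter_upwards [hM] with p hp
  exact mul_le_mul_of_nonneg_left (hle p.1 p.2 hp) (cwW_pos N p).le

lemma cwQ_abs_le (hσ : ∀ᵐ s ∂σ, |s| ≤ M) (hN : 0 < N) (h : Adm M G) (h' : Adm M G')
    (hle : ∀ s θ, |s| ≤ M → |G (s, θ)| ≤ G' (s, θ)) : |cwQ σ N G| ≤ cwQ σ N G' := by
  rw [abs_le]
  constructor
  · have := cwQ_mono σ hσ hN h.neg h' (fun s θ hs => (neg_le_abs _).trans (hle s θ hs))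
    have e : cwQ σ N (fun p => - G p) = - cwQ σ N G := by
      have := cwQ_const_mul σ (N := N) (G := G) (-1)
      simpa using this
    linarith
  · exact cwQ_mono σ hσ hN h h' (fun s θ hs => (le_abs_self _).trans (hle s θ hs))

lemma cwQ_fub1 (hσ : ∀ᵐ s ∂σ, |s| ≤ M) (hN : 0 < N) (h : Adm M G) :
    cwQ σ N G = ∫ s, (∫ θ, Real.exp (θ * s - N * θ ^ 2 / 2) * G (s, θ)) ∂σ :=
  integral_prod _ (h.integrable σ hσ hN)

lemma cwQ_fub2 (hσ : ∀ᵐ s ∂σ, |s| ≤ M) (hN : 0 < N) (h : Adm M G) :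
    cwQ σ N G = ∫ θ, ∫ s, Real.exp (θ * s - N * θ ^ 2 / 2) * G (s, θ) ∂σ :=
  integral_prod_symm _ (h.integrable σ hσ hN)

end P4

section P5

lemma gA_shift (c s d : ℝ) : gA c (s + d) = gA (c - d) s := by
  unfold gA; congr 1; simp only [sub_le_iff_le_add]

lemma gB_shift (N c s d : ℝ) : gB N c (s + d) = gB N (c - d) s := by
  unfold gB
  congr with t
  rw [show s + d + N * t = (s + N * t) + d by ring, gA_shift]

lemma gA_abs (c s : ℝ) : |gA c s| ≤ 1 := by
  rw [abs_of_nonneg (gA_nonneg c s)]; exact gA_le c s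

lemma gB_abs {N : ℝ} (hN : 0 < N) (c s : ℝ) : |gB N c s| ≤ 1 := by
  rw [abs_of_nonneg (gB_nonneg hN c s)]; exact gB_le hN c s

lemma gF_abs {N : ℝ} (hN : 0 < N) (c s : ℝ) : |gF N c s| ≤ 2 * √N := by
  refine (gF_bound hN c s).trans ?_
  have : Real.exp (-(s - c) ^ 2 / (2 * N)) ≤ 1 := by
    rw [Real.exp_le_one_iff]
    have : 0 ≤ (s - c) ^ 2 / (2 * N) := by positivity
    rw [neg_div]; linarith
  have h2 : 0 ≤ 2 * √N := by positivity
  nlinarith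

lemma adm_gA (M c : ℝ) : Adm M (fun p => gA c p.1) :=
  Adm.fst_bdd (gA_meas c) 1 fun s _ => gA_abs c s

lemma adm_gA2 (M c N : ℝ) : Adm M (fun p => gA c (N * p.2)) :=
  Adm.snd_poly (f := fun θ => gA c (N * θ)) ((gA_meas c).comp (by fun_prop)) 1 0
    fun s => by simpa using gA_abs c _

lemma adm_gB (M c : ℝ) {N : ℝ} (hN : 0 < N) : Adm M (fun p => gB N c p.1) :=
  Adm.fst_bdd (gB_mono hN c).measurable 1 fun s _ => gB_abs hN c s

lemma adm_gF (M c : ℝ) {N : ℝ} (hN : 0 < N) : Adm M (fun p => gF N c p.1) :=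
  Adm.fst_bdd (gF_cont hN c).measurable _ fun s _ => gF_abs hN c s

lemma adm_E (M x : ℝ) {N : ℝ} (hN : 0 < N) :
    Adm M (fun p => Real.exp (-(p.1 - x) ^ 2 / (2 * N))) :=
  Adm.fst_bdd (f := fun s => Real.exp (-(s - x) ^ 2 / (2 * N))) (by fun_prop) 1 fun s _ => by
    rw [abs_of_pos (Real.exp_pos _), Real.exp_le_one_iff, neg_div]
    have : 0 ≤ (s - x) ^ 2 / (2 * N) := by positivity
    linarith

lemma q_A (σ : Measure ℝ) [IsProbabilityMeasure σ] {M N : ℝ} (hσ : ∀ᵐ s ∂σ, |s| ≤ M) (hN : 0 < N)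
    (c : ℝ) : cwQ σ N (fun p => gA c p.1) = gI N * ∫ s, Real.exp (s ^ 2 / (2 * N)) * gA c s ∂σ := by
  rw [cwQ_fub1 σ hσ hN (adm_gA M c), ← integral_const_mul]
  congr with s
  simp only
  rw [integral_mul_const, gauss_theta hN]; ring

lemma q_one (σ : Measure ℝ) [IsProbabilityMeasure σ] {M N : ℝ} (hσ : ∀ᵐ s ∂σ, |s| ≤ M) (hN : 0 < N) :
    cwQ σ N (fun _ => 1) = gI N * ∫ s, Real.exp (s ^ 2 / (2 * N)) ∂σ := by
  rw [cwQ_fub1 σ hσ hN (Adm.const 1), ← integral_const_mul]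
  congr with s
  rw [integral_mul_const, gauss_theta hN]; ring

lemma q_B_aux (σ : Measure ℝ) [IsProbabilityMeasure σ] {M N : ℝ} (hσ : ∀ᵐ s ∂σ, |s| ≤ M)
    (hN : 0 < N) (c : ℝ) :
    cwQ σ N (fun p => gB N c p.1) = cwQ σ N (fun p => gA c (N * p.2)) := by
  rw [cwQ_fub1 σ hσ hN (adm_gB M c hN), cwQ_fub1 σ hσ hN (adm_gA2 M c N)]
  congr with s
  simp only
  rw [integral_mul_const, gauss_theta hN, gB_theta hN]

lemma q_B (ρ : Measure ℝ) [IsProbabilityMeasure ρ] (L : ℝ) (hL : ρ (Set.Icc (-L) L) = 1) (n : ℕ)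
    (hn : 1 ≤ n) (c : ℝ) : cwQ (cwS ρ n) n (fun p => gB n c p.1) =
    ∫ θ, gA c (n * θ) * Real.exp (-n * hfun ρ θ) := by
  have := cwS_prob ρ n
  have hN : (0 : ℝ) < n := by exact_mod_cast hn
  rw [q_B_aux _ (cwS_ae ρ L hL n) hN, cwQ_fub2 _ (cwS_ae ρ L hL n) hN (adm_gA2 _ c n)]
  congr with θ
  simp only
  rw [integral_mul_const, cwS_mgf ρ L hL]; ring

lemma q_J (ρ : Measure ℝ) [IsProbabilityMeasure ρ] (L : ℝ) (hL : ρ (Set.Icc (-L) L) = 1) (n : ℕ)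
    (hn : 1 ≤ n) : (∫ θ, Real.exp (-n * hfun ρ θ)) = gI n * ∫ s, Real.exp (s ^ 2 / (2 * n)) ∂(cwS ρ n) := by
  have := cwS_prob ρ n
  have hN : (0 : ℝ) < n := by exact_mod_cast hn
  rw [← q_one _ (cwS_ae ρ L hL n) hN, cwQ_fub2 _ (cwS_ae ρ L hL n) hN (Adm.const 1)]
  congr with θ
  rw [integral_mul_const, cwS_mgf ρ L hL]; ring

lemma q_int_gA (ρ : Measure ℝ) [IsProbabilityMeasure ρ] (L : ℝ) (hL : ρ (Set.Icc (-L) L) = 1) (n : ℕ)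
    (hn : 1 ≤ n) (c : ℝ) : Integrable (fun θ => gA c (n * θ) * Real.exp (-n * hfun ρ θ)) := by
  have := cwS_prob ρ n
  have hN : (0 : ℝ) < n := by exact_mod_cast hn
  have h := ((adm_gA2 (n * L) c n).integrable _ (cwS_ae ρ L hL n) hN).integral_prod_right
  refine h.congr (Filter.Eventually.of_forall fun θ => ?_)
  simp only [cwW]
  rw [integral_mul_const, cwS_mgf ρ L hL]; ring

lemma q_int_J (ρ : Measure ℝ) [IsProbabilityMeasure ρ] (L : ℝ) (hL : ρ (Set.Icc (-L) L) = 1) (n : ℕ)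
    (hn : 1 ≤ n) : Integrable (fun θ => Real.exp (-n * hfun ρ θ)) := by
  have := cwS_prob ρ n
  have hN : (0 : ℝ) < n := by exact_mod_cast hn
  have h := ((Adm.const (M := n * L) 1).integrable _ (cwS_ae ρ L hL n) hN).integral_prod_right
  refine h.congr (Filter.Eventually.of_forall fun θ => ?_)
  simp only [cwW]
  rw [integral_mul_const, cwS_mgf ρ L hL]; ring

lemma q_gauss (ρ : Measure ℝ) [IsProbabilityMeasure ρ] (L : ℝ) (hL : ρ (Set.Icc (-L) L) = 1) (n : ℕ)
    (hn : 1 ≤ n) (y l : ℝ) :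
    cwQ (cwS ρ n) n (fun p => Real.exp (l * (p.2 - y)) *
      Real.exp (-(p.1 - n * y) ^ 2 / (2 * n))) =
    gI n * Real.exp (l ^ 2 / n) * Real.exp (-n * hfun ρ (y + l / n)) := by
  have := cwS_prob ρ n
  have hN : (0 : ℝ) < n := by exact_mod_cast hn
  rw [cwQ_fub1 _ (cwS_ae ρ L hL n) hN ((Adm.expl l y).mul (adm_E _ (n * y) hN)),
    ← cwS_mgf ρ L hL, ← integral_const_mul]
  congr with s
  have e : ∀ θ : ℝ, Real.exp (θ * s - n * θ ^ 2 / 2) * (Real.exp (l * (θ - y)) *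
      Real.exp (-(s - n * y) ^ 2 / (2 * n))) =
      Real.exp (θ * (s + l) - n * θ ^ 2 / 2) * Real.exp (-l * y - (s - n * y) ^ 2 / (2 * n)) := by
    intro θ
    rw [← Real.exp_add, ← Real.exp_add, ← Real.exp_add]
    congr 1; ring
  simp_rw [e]
  rw [integral_mul_const, gauss_theta hN, mul_assoc, mul_assoc, ← Real.exp_add, ← Real.exp_add]
  congr 2
  field_simp; ring

lemma q_stein (ρ : Measure ℝ) [IsProbabilityMeasure ρ] (L : ℝ) (hL : ρ (Set.Icc (-L) L) = 1) (n : ℕ)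
    (hn : 1 ≤ n) (k : ℕ) {a C c ε : ℝ} (hf : HFacts ρ L k a C c ε) (F A B : ℝ → ℝ) (hF : Measurable F)
    (hA : Monotone A) (hB : Monotone B) (K : ℝ) (hFK : ∀ s, |F s| ≤ K) (hAK : ∀ s, |A s| ≤ K)
    (hBK : ∀ s, |B s| ≤ K)
    (hinc : ∀ a b, a ≤ b → F b - F a ≤ (b - a) * (A b - B a)) :
    cwQ (cwS ρ n) n (fun p => deriv (hfun ρ) p.2 * F p.1) +
      cwQ (cwS ρ n) n (fun p => deriv (deriv (hfun ρ)) p.2 *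
        (A (p.1 + 2 * L) - B (p.1 - 2 * L))) ≤
    cwQ (cwS ρ n) n (fun p => A (p.1 + 2 * L)) - cwQ (cwS ρ n) n (fun p => B (p.1 - 2 * L)) := by
  have := cwS_prob ρ n
  have hN : (0 : ℝ) < n := by exact_mod_cast hn
  have hσ := cwS_ae ρ L hL n
  have aF : Adm (n * L) (fun p => F p.1) := Adm.fst_bdd hF K fun s _ => hFK s
  have aA : Adm (n * L) (fun p => A (p.1 + 2 * L)) :=
    Adm.fst_bdd (f := fun s => A (s + 2 * L)) (hA.measurable.comp (by fun_prop)) K fun s _ => hAK _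
  have aB : Adm (n * L) (fun p => B (p.1 - 2 * L)) :=
    Adm.fst_bdd (f := fun s => B (s - 2 * L)) (hB.measurable.comp (by fun_prop)) K fun s _ => hBK _
  have a1 : Adm (n * L) (fun p => deriv (hfun ρ) p.2) :=
    Adm.snd_poly (measurable_deriv _) C _ hf.d1
  have a2 : Adm (n * L) (fun p => deriv (deriv (hfun ρ)) p.2) :=
    Adm.snd_poly (measurable_deriv _) C _ hf.d2
  have as : Adm (n * L) (fun p => p.1) := Adm.fst_bdd (f := fun s => s) measurable_id _ fun s hs => hs
  have at' : Adm (n * L) (fun p => n * p.2) :=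
    Adm.snd_poly (f := fun θ => n * θ) (by fun_prop) n 1 fun θ => by
      rw [abs_mul, pow_one, abs_of_pos hN]
  have aL : Adm (n * L) (fun p => (p.1 - n * (p.2 - deriv (hfun ρ) p.2)) * F p.1) := by
    refine (((as.sub at').add ((Adm.const (n : ℝ)).mul a1)).mul aF).congr fun p => ?_
    ring
  have aR : Adm (n * L) (fun p => n * (1 - deriv (deriv (hfun ρ)) p.2) *
      (A (p.1 + 2 * L) - B (p.1 - 2 * L))) :=
    ((Adm.const (n : ℝ)).mul ((Adm.const 1).sub a2)).mul (aA.sub aB)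
  have h1 : cwQ (cwS ρ n) n (fun p => (p.1 - n * (p.2 - deriv (hfun ρ) p.2)) * F p.1) ≤
      cwQ (cwS ρ n) n (fun p => n * (1 - deriv (deriv (hfun ρ)) p.2) *
      (A (p.1 + 2 * L) - B (p.1 - 2 * L))) := by
    rw [cwQ_fub2 _ hσ hN aL, cwQ_fub2 _ hσ hN aR]
    refine integral_mono (aL.integrable _ hσ hN).integral_prod_right
      (aR.integrable _ hσ hN).integral_prod_right fun θ => ?_
    exact cwS_stein ρ L hL n θ F A B hF hA hB K hFK hAK hBK hinc
  have h2 : cwQ (cwS ρ n) n (fun p => (p.1 - n * p.2) * F p.1) = 0 := by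
    rw [cwQ_fub1 _ hσ hN ((as.sub at').mul aF)]
    have : ∀ s, ∫ θ, Real.exp (θ * s - n * θ ^ 2 / 2) * ((s - n * θ) * F s) = 0 := by
      intro s
      simp_rw [← mul_assoc]
      rw [integral_mul_const, gauss_theta_mean hN, zero_mul]
    simp [this]
  have h3 : cwQ (cwS ρ n) n (fun p => (p.1 - n * (p.2 - deriv (hfun ρ) p.2)) * F p.1) =
      n * cwQ (cwS ρ n) n (fun p => deriv (hfun ρ) p.2 * F p.1) := by
    have : (fun p : ℝ × ℝ => (p.1 - n * (p.2 - deriv (hfun ρ) p.2)) * F p.1) =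
        fun p => (p.1 - n * p.2) * F p.1 + n * (deriv (hfun ρ) p.2 * F p.1) := by
      ext p; ring
    rw [this, cwQ_add _ hσ hN ((as.sub at').mul aF) ((Adm.const _).mul (a1.mul aF)), h2,
      cwQ_const_mul, zero_add]
  have h4 : cwQ (cwS ρ n) n (fun p => n * (1 - deriv (deriv (hfun ρ)) p.2) *
      (A (p.1 + 2 * L) - B (p.1 - 2 * L))) =
      n * (cwQ (cwS ρ n) n (fun p => A (p.1 + 2 * L)) - cwQ (cwS ρ n) n (fun p => B (p.1 - 2 * L))
       - cwQ (cwS ρ n) n (fun p => deriv (deriv (hfun ρ)) p.2 *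
        (A (p.1 + 2 * L) - B (p.1 - 2 * L)))) := by
    have : (fun p : ℝ × ℝ => n * (1 - deriv (deriv (hfun ρ)) p.2) *
      (A (p.1 + 2 * L) - B (p.1 - 2 * L))) = fun p => n * ((A (p.1 + 2 * L) - B (p.1 - 2 * L)) -
        deriv (deriv (hfun ρ)) p.2 * (A (p.1 + 2 * L) - B (p.1 - 2 * L))) := by
      ext p; ring
    rw [this, cwQ_const_mul, cwQ_sub _ hσ hN (aA.sub aB) (a2.mul (aA.sub aB)),
      cwQ_sub _ hσ hN aA aB]
  rw [h3, h4] at h1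
  have := le_of_mul_le_mul_left h1 hN
  linarith


end P5

section P6

lemma E_shift {N L s x δ : ℝ} (hN : 1 ≤ N) (hL : 0 ≤ L) (hs : |s| ≤ N * L) (hx : |x| ≤ N)
    (hδ : |δ| ≤ 4 * L) :
    Real.exp (-(s - x + δ) ^ 2 / (2 * N)) ≤
      Real.exp (8 * L * (L + 1)) * Real.exp (-(s - x) ^ 2 / (2 * N)) := by
  rw [← Real.exp_add]
  gcongr
  rw [← sub_nonneg]
  have h1 : |(s - x) * δ| ≤ (N * L + N) * (4 * L) := by
    rw [abs_mul]
    gcongr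
    exact (abs_sub _ _).trans (add_le_add hs hx)
  have h2 := neg_abs_le ((s - x) * δ)
  have e : 8 * L * (L + 1) + -(s - x) ^ 2 / (2 * N) - -(s - x + δ) ^ 2 / (2 * N) =
    (8 * L * (L + 1) * (2 * N) + 2 * ((s - x) * δ) + δ ^ 2) / (2 * N) := by
    field_simp; ring
  rw [e]
  apply div_nonneg _ (by positivity)
  nlinarith [sq_nonneg δ, mul_nonneg (mul_nonneg hL (by linarith : 0 ≤ N)) (by linarith : 0 ≤ L + 1)]

lemma AB_bound {N L s x c s1 s2 : ℝ} (hN : 1 ≤ N) (hL : 0 ≤ L) (hs : |s| ≤ N * L) (hx : |x| ≤ N)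
    (h1 : |s1 - c - (s - x)| ≤ 4 * L) (h2 : |s2 - c - (s - x)| ≤ 4 * L) :
    |gA c s1 - gB N c s2| ≤
      2 * Real.exp (8 * L * (L + 1)) * Real.exp (-(s - x) ^ 2 / (2 * N)) := by
  have hb0 := E_shift hN hL hs hx h2
  rw [show s - x + (s2 - c - (s - x)) = s2 - c by ring] at hb0
  have hb := (gA_sub_gB (by linarith : 0 < N) c s2).trans hb0
  have ha : |gA c s1 - gA c s2| ≤
      Real.exp (8 * L * (L + 1)) * Real.exp (-(s - x) ^ 2 / (2 * N)) := by
    have hkey : |s - x| ≤ 4 * L → (1 : ℝ) ≤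
        Real.exp (8 * L * (L + 1)) * Real.exp (-(s - x) ^ 2 / (2 * N)) := by
      intro h
      rw [← Real.exp_add, Real.one_le_exp_iff]
      have h3 : (s - x) ^ 2 ≤ (4 * L) ^ 2 := by
        rw [← sq_abs]; gcongr
      have h4 : (s - x) ^ 2 / (2 * N) ≤ 8 * L * (L + 1) := by
        rw [div_le_iff₀ (by positivity)]
        nlinarith [mul_nonneg hL hL]
      rw [neg_div]; linarith
    rw [abs_le] at h1 h2
    unfold gA
    split_ifs with i1 i2 i2
    · simp; positivity
    · simp only [sub_zero, abs_one]
      apply hkey; rw [abs_le]; constructor <;> linarith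
    · simp only [zero_sub, abs_neg, abs_one]
      apply hkey; rw [abs_le]; constructor <;> linarith
    · simp; positivity
  have := abs_sub_le (gA c s1) (gA c s2) (gB N c s2)
  linarith

/-- variation of `n h` on the scale `n^{-1/2}` -/
lemma nh_var (ρ : Measure ℝ) (L : ℝ) (k : ℕ) (hk : 2 ≤ k) {a C c ε : ℝ} (hf : HFacts ρ L k a C c ε)
    (B : ℝ) (hB : 0 ≤ B) : ∃ D, 0 ≤ D ∧ ∀ n : ℝ, 1 ≤ n → ∀ y, 0 ≤ y → √n * y ^ (2 * k - 1) ≤ 1 →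
      ∀ θ, |θ - y| ≤ B / √n → |n * hfun ρ θ - n * hfun ρ y| ≤ D := by
  refine ⟨C * B * (2 ^ (2 * k - 1) * (1 + B ^ (2 * k - 1))), by have := hf.hC; positivity, ?_⟩
  intro n hn y hy hy1 θ hθ
  have hq : 1 ≤ √n := Real.one_le_sqrt.2 hn
  have hqq : √n * √n = n := Real.mul_self_sqrt (by linarith)
  have hC := hf.hC
  set q := √n with hqd
  have hb : ∀ t ∈ Set.uIcc y θ, ‖deriv (hfun ρ) t‖ ≤ C * (y + B / q) ^ (2 * k - 1) := by
    intro t ht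
    refine (hf.d1 t).trans ?_
    gcongr
    have h1 : |t - y| ≤ |θ - y| := Set.abs_sub_left_of_mem_uIcc ht
    have h2 : |t| ≤ |t - y| + |y| := by
      have := abs_add_le (t - y) y; simpa using this
    rw [abs_of_nonneg hy] at h2
    linarith
  have hm := (convex_uIcc y θ).norm_image_sub_le_of_norm_deriv_le
    (fun t _ => (hf.diff t)) hb (Set.left_mem_uIcc) (Set.right_mem_uIcc)
  simp only [Real.norm_eq_abs] at hm
  have hp : q * (y + B / q) ^ (2 * k - 1) ≤ 2 ^ (2 * k - 1) * (1 + B ^ (2 * k - 1)) := by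
    have h1 := add_pow_le hy (show 0 ≤ B / q by positivity) (2 * k - 1)
    have h2 : (2 : ℝ) ^ (2 * k - 1 - 1) ≤ 2 ^ (2 * k - 1) := by gcongr <;> [norm_num; omega]
    have h3 : q * (B / q) ^ (2 * k - 1) ≤ B ^ (2 * k - 1) := by
      rw [div_pow, mul_div_assoc', div_le_iff₀ (by positivity), mul_comm]
      gcongr
      exact le_self_pow₀ hq (by omega)
    calc q * (y + B / q) ^ (2 * k - 1)
        ≤ q * (2 ^ (2 * k - 1 - 1) * (y ^ (2 * k - 1) + (B / q) ^ (2 * k - 1))) := by gcongr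
      _ ≤ q * (2 ^ (2 * k - 1) * (y ^ (2 * k - 1) + (B / q) ^ (2 * k - 1))) := by gcongr
      _ = 2 ^ (2 * k - 1) * (q * y ^ (2 * k - 1) + q * (B / q) ^ (2 * k - 1)) := by ring
      _ ≤ _ := by gcongr
  rw [← mul_sub, abs_mul, abs_of_nonneg (by linarith : 0 ≤ n)]
  calc n * |hfun ρ θ - hfun ρ y| ≤ n * (C * (y + B / q) ^ (2 * k - 1) * (B / q)) := by
        gcongr
        exact hm.trans (by gcongr)
    _ = C * B * (q * (y + B / q) ^ (2 * k - 1)) := by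
        rw [← hqq]; field_simp
    _ ≤ _ := by gcongr

lemma abs_pow_le (j : ℕ) (q : ℝ) (hq : 0 < q) (θ y : ℝ) (hy : 0 ≤ y) :
    |θ| ^ j ≤ 2 ^ j * (y ^ j + j.factorial * (1 / q) ^ j *
      (Real.exp (q * (θ - y)) + Real.exp (-q * (θ - y)))) := by
  have h1 : |θ| ≤ y + |θ - y| := by
    have := abs_add_le y (θ - y); rw [abs_of_nonneg hy] at this; simpa using this
  have h2 := add_pow_le hy (abs_nonneg (θ - y)) j
  have h2' : (2 : ℝ) ^ (j - 1) ≤ 2 ^ j := by gcongr <;> [norm_num; omega]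
  have h3 : |θ - y| ^ j ≤ j.factorial * (1 / q) ^ j *
      (Real.exp (q * (θ - y)) + Real.exp (-q * (θ - y))) := by
    have h4 := Real.pow_div_factorial_le_exp (q * |θ - y|) (by positivity) j
    rw [div_le_iff₀ (by positivity), mul_pow] at h4
    have h5 : Real.exp (q * |θ - y|) ≤ Real.exp (q * (θ - y)) + Real.exp (-q * (θ - y)) := by
      rcases abs_cases (θ - y) with ⟨e, _⟩ | ⟨e, _⟩
      · rw [e]; linarith [Real.exp_pos (-q * (θ - y))]
      · rw [e, show q * -(θ - y) = -q * (θ - y) by ring]; linarith [Real.exp_pos (q * (θ - y))]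
    calc |θ - y| ^ j = (1 / q) ^ j * (q ^ j * |θ - y| ^ j) := by
          rw [← mul_assoc, ← mul_pow, one_div_mul_cancel hq.ne', one_pow, one_mul]
      _ ≤ (1 / q) ^ j * (Real.exp (q * |θ - y|) * j.factorial) := by gcongr
      _ ≤ (1 / q) ^ j * ((Real.exp (q * (θ - y)) + Real.exp (-q * (θ - y))) * j.factorial) := by gcongr
      _ = _ := by ring
  calc |θ| ^ j ≤ (y + |θ - y|) ^ j := by gcongr
    _ ≤ 2 ^ (j - 1) * (y ^ j + |θ - y| ^ j) := h2
    _ ≤ 2 ^ j * (y ^ j + |θ - y| ^ j) := by gcongr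
    _ ≤ _ := by gcongr

lemma q_pow (ρ : Measure ℝ) [IsProbabilityMeasure ρ] (L : ℝ) (hL : ρ (Set.Icc (-L) L) = 1)
    (k : ℕ) (hk : 2 ≤ k) {a C c ε : ℝ} (hf : HFacts ρ L k a C c ε) (j : ℕ) :
    ∃ D, 0 ≤ D ∧ ∀ n : ℕ, 1 ≤ n → ∀ y, 0 ≤ y → √(n : ℝ) * y ^ (2 * k - 1) ≤ 1 →
      cwQ (cwS ρ n) n (fun p => |p.2| ^ j * Real.exp (-(p.1 - n * y) ^ 2 / (2 * n))) ≤
        D * (gI n * (y ^ j + (1 / √(n : ℝ)) ^ j) * Real.exp (-n * hfun ρ y)) := by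
  obtain ⟨D, hD, hvar⟩ := nh_var ρ L k hk hf 1 zero_le_one
  refine ⟨2 ^ j * (1 + j.factorial * (2 * Real.exp 1 * Real.exp D)), by positivity, ?_⟩
  intro n hn y hy hy1
  have := cwS_prob ρ n
  have hN1 : (1 : ℝ) ≤ n := by exact_mod_cast hn
  have hN : (0 : ℝ) < n := by linarith
  have hσ := cwS_ae ρ L hL n
  have hq : 1 ≤ √(n : ℝ) := Real.one_le_sqrt.2 hN1
  have hqq : √(n : ℝ) * √(n : ℝ) = n := Real.mul_self_sqrt hN.le
  set q := √(n : ℝ) with hqd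
  have aE := adm_E (n * L) (n * y) hN
  have ap : Adm (n * L) (fun p => |p.2| ^ j) :=
    Adm.snd_poly (f := fun θ => |θ| ^ j) (by fun_prop) 1 j fun θ => by simp
  have a1 : Adm (n * L) (fun p => Real.exp (q * (p.2 - y)) * Real.exp (-(p.1 - n * y) ^ 2 / (2 * n))) :=
    (Adm.expl q y).mul aE
  have a2 : Adm (n * L) (fun p => Real.exp (-q * (p.2 - y)) * Real.exp (-(p.1 - n * y) ^ 2 / (2 * n))) :=
    (Adm.expl (-q) y).mul aE
  have a0 : Adm (n * L) (fun p => Real.exp (0 * (p.2 - y)) * Real.exp (-(p.1 - n * y) ^ 2 / (2 * n))) :=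
    (Adm.expl 0 y).mul aE
  have b0 := (Adm.const (M := n * L) (2 ^ j * y ^ j)).mul a0
  have b12 := (Adm.const (M := n * L) (2 ^ j * (j.factorial * (1 / q) ^ j))).mul (a1.add a2)
  have h1 := cwQ_mono _ hσ hN (ap.mul aE) (b0.add b12) (fun s θ _ => by
    have h := mul_le_mul_of_nonneg_right (abs_pow_le j q (by linarith) θ y hy)
      (Real.exp_pos (-(s - n * y) ^ 2 / (2 * n))).le
    refine h.trans (le_of_eq ?_)
    simp only [zero_mul, Real.exp_zero]
    ring)
  rw [cwQ_add _ hσ hN b0 b12, cwQ_const_mul, cwQ_const_mul, cwQ_add _ hσ hN a1 a2,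
    q_gauss ρ L hL n hn, q_gauss ρ L hL n hn, q_gauss ρ L hL n hn] at h1
  refine h1.trans ?_
  have hG := gI_pos hN
  have e1 : q ^ 2 / n = 1 := by rw [pow_two, hqq]; field_simp
  have e2 : q / n = 1 / q := by
    rw [← hqq]; field_simp
  have v1 : Real.exp (-n * hfun ρ (y + q / n)) ≤ Real.exp D * Real.exp (-n * hfun ρ y) := by
    rw [← Real.exp_add]
    gcongr
    have := hvar n hN1 y hy hy1 (y + q / n) (by
      rw [e2]; simp [abs_of_nonneg (by linarith : 0 ≤ q), ← hqd])
    have := (abs_le.1 this).1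
    linarith
  have v2 : Real.exp (-n * hfun ρ (y + -q / n)) ≤ Real.exp D * Real.exp (-n * hfun ρ y) := by
    rw [← Real.exp_add]
    gcongr
    have := hvar n hN1 y hy hy1 (y + -q / n) (by
      rw [neg_div, e2]; simp [abs_of_nonneg (by linarith : 0 ≤ q), ← hqd])
    have := (abs_le.1 this).1
    linarith
  rw [neg_sq, e1]
  simp only [zero_div, add_zero, ne_eq, OfNat.ofNat_ne_zero, not_false_eq_true, zero_pow,
    Real.exp_zero, mul_one]
  set X := Real.exp (-n * hfun ρ y) with hX
  have hX0 : 0 < X := Real.exp_pos _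
  calc 2 ^ j * y ^ j * (gI n * X) + 2 ^ j * (j.factorial * (1 / q) ^ j) *
        (gI n * Real.exp 1 * Real.exp (-n * hfun ρ (y + q / n)) +
          gI n * Real.exp 1 * Real.exp (-n * hfun ρ (y + -q / n)))
      ≤ 2 ^ j * y ^ j * (gI n * X) + 2 ^ j * (j.factorial * (1 / q) ^ j) *
        (gI n * Real.exp 1 * (Real.exp D * X) + gI n * Real.exp 1 * (Real.exp D * X)) := by
        gcongr
    _ = (2 ^ j * gI n * X) * (1 * y ^ j + (j.factorial * (2 * Real.exp 1 * Real.exp D)) * (1 / q) ^ j) := by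
        ring
    _ ≤ (2 ^ j * gI n * X) * ((1 + j.factorial * (2 * Real.exp 1 * Real.exp D)) * y ^ j +
         (1 + j.factorial * (2 * Real.exp 1 * Real.exp D)) * (1 / q) ^ j) := by
        gcongr
        · have : 0 ≤ j.factorial * (2 * Real.exp 1 * Real.exp D) := by positivity
          linarith
        · linarith
    _ = _ := by ring

end P6

section P7

/-- error scale -/
noncomputable def cwOm (ρ : Measure ℝ) (k n : ℕ) (y : ℝ) : ℝ :=
  (gI n * (√(n : ℝ) * (y ^ (2 * k - 1) + (1 / √(n : ℝ)) ^ (2 * k - 1)) +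
    (y ^ (2 * k - 2) + (1 / √(n : ℝ)) ^ (2 * k - 2))) + 1 / n) * Real.exp (-n * hfun ρ y)

lemma err_bound (ρ : Measure ℝ) [IsProbabilityMeasure ρ] (L : ℝ) (hL : ρ (Set.Icc (-L) L) = 1)
    (k : ℕ) (hk : 2 ≤ k) {a C c ε : ℝ} (hf : HFacts ρ L k a C c ε) :
    ∃ D, 0 ≤ D ∧ ∀ n : ℕ, 1 ≤ n → ∀ y, 0 ≤ y → y ≤ 1 → √(n : ℝ) * y ^ (2 * k - 1) ≤ 1 →
      ∀ b d1 d2 : ℝ, |b - n * y| ≤ 2 * L → |d1| ≤ 2 * L → |d2| ≤ 2 * L →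
      |cwQ (cwS ρ n) n (fun p => deriv (hfun ρ) p.2 * gF n b p.1)| +
      |cwQ (cwS ρ n) n (fun p => deriv (deriv (hfun ρ)) p.2 *
        (gA b (p.1 + d1) - gB n b (p.1 + d2)))| ≤ D * cwOm ρ k n y := by
  obtain ⟨D1, hD1, h1⟩ := q_pow ρ L hL k hk hf (2 * k - 1)
  obtain ⟨D2, hD2, h2⟩ := q_pow ρ L hL k hk hf (2 * k - 2)
  have hC := hf.hC
  have hL0 := cw_L_nonneg ρ L hL
  set Dx := Real.exp (8 * L * (L + 1)) with hDx
  have hDx0 : 0 < Dx := Real.exp_pos _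
  refine ⟨2 * C * Dx * (D1 + D2), by positivity, ?_⟩
  intro n hn y hy hy1 hyq b d1 d2 hb hd1 hd2
  have := cwS_prob ρ n
  have hN1 : (1 : ℝ) ≤ n := by exact_mod_cast hn
  have hN : (0 : ℝ) < n := by linarith
  have hσ := cwS_ae ρ L hL n
  have hx : |n * y| ≤ (n : ℝ) := by
    rw [abs_of_nonneg (by positivity)]; nlinarith
  have aE := adm_E (n * L) (n * y) hN
  have ap : ∀ j : ℕ, Adm (n * L) (fun p => |p.2| ^ j) := fun j =>
    Adm.snd_poly (f := fun θ => |θ| ^ j) (by fun_prop) 1 j fun θ => by simp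
  have a1 : Adm (n * L) (fun p => deriv (hfun ρ) p.2) :=
    Adm.snd_poly (measurable_deriv _) C _ hf.d1
  have a2 : Adm (n * L) (fun p => deriv (deriv (hfun ρ)) p.2) :=
    Adm.snd_poly (measurable_deriv _) C _ hf.d2
  have aA : Adm (n * L) (fun p => gA b (p.1 + d1)) :=
    (adm_gA (n * L) (b - d1)).congr fun p => (gA_shift b p.1 d1).symm
  have aB : Adm (n * L) (fun p => gB n b (p.1 + d2)) :=
    (adm_gB (n * L) (b - d2) hN).congr fun p => (gB_shift n b p.1 d2).symm
  have k1 := cwQ_abs_le _ hσ hN (a1.mul (adm_gF (n * L) b hN))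
    ((Adm.const (2 * C * Dx * √(n : ℝ))).mul ((ap (2 * k - 1)).mul aE)) (fun s θ hs => by
      simp only
      rw [abs_mul]
      have e1 := hf.d1 θ
      have e2 := gF_bound hN b s
      have e3 := E_shift (δ := n * y - b) hN1 hL0 hs hx (by rw [abs_sub_comm]; linarith)
      rw [show s - n * y + (n * y - b) = s - b by ring] at e3
      calc _ ≤ (C * |θ| ^ (2 * k - 1)) * (2 * √(n : ℝ) *
            (Dx * Real.exp (-(s - n * y) ^ 2 / (2 * n)))) := by
            gcongr
            exact e2.trans (by gcongr)
        _ = _ := by ring)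
  have k2 := cwQ_abs_le _ hσ hN (a2.mul (aA.sub aB))
    ((Adm.const (2 * C * Dx)).mul ((ap (2 * k - 2)).mul aE)) (fun s θ hs => by
      simp only
      rw [abs_mul]
      have e1 := hf.d2 θ
      rw [abs_le] at hb hd1 hd2
      have e2 := AB_bound (c := b) (s1 := s + d1) (s2 := s + d2) hN1 hL0 hs hx
        (by rw [abs_le]; constructor <;> linarith) (by rw [abs_le]; constructor <;> linarith)
      calc _ ≤ (C * |θ| ^ (2 * k - 2)) * (2 * Dx * Real.exp (-(s - n * y) ^ 2 / (2 * n))) := by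
            gcongr
        _ = _ := by ring)
  rw [cwQ_const_mul] at k1 k2
  have j1 := h1 n hn y hy hyq
  have j2 := h2 n hn y hy hyq
  have hG := gI_pos hN
  unfold cwOm
  set X := Real.exp (-n * hfun ρ y)
  have hX : 0 < X := Real.exp_pos _
  set q := √(n : ℝ) with hq
  have hq0 : 0 < q := Real.sqrt_pos.2 hN
  set P1 := y ^ (2 * k - 1) + (1 / q) ^ (2 * k - 1)
  set P2 := y ^ (2 * k - 2) + (1 / q) ^ (2 * k - 2)
  have hP1 : 0 ≤ P1 := by positivity
  have hP2 : 0 ≤ P2 := by positivity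
  have hDD1 : D1 ≤ D1 + D2 := by linarith
  have hDD2 : D2 ≤ D1 + D2 := by linarith
  calc _ ≤ 2 * C * Dx * q * (D1 * (gI n * P1 * X)) + 2 * C * Dx * (D2 * (gI n * P2 * X)) :=
        add_le_add (k1.trans (by gcongr)) (k2.trans (by gcongr))
    _ ≤ 2 * C * Dx * q * ((D1 + D2) * (gI n * P1 * X)) +
        2 * C * Dx * ((D1 + D2) * (gI n * P2 * X)) + 2 * C * Dx * (D1 + D2) * (1 / n * X) := by
        rw [← add_zero (2 * C * Dx * q * (D1 * (gI n * P1 * X)) + 2 * C * Dx * (D2 * (gI n * P2 * X)))]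
        gcongr
        positivity
    _ = _ := by ring

lemma shift_bound (ρ : Measure ℝ) [IsProbabilityMeasure ρ] (L : ℝ) (hL : ρ (Set.Icc (-L) L) = 1)
    (k : ℕ) (hk : 2 ≤ k) {a C c ε : ℝ} (hf : HFacts ρ L k a C c ε) :
    ∃ D, 0 ≤ D ∧ ∀ n : ℕ, 1 ≤ n → ∀ y, 0 ≤ y → √(n : ℝ) * y ^ (2 * k - 1) ≤ 1 →
      ∀ b : ℝ, |b - n * y| ≤ 4 * L →
      |(∫ θ, gA b (n * θ) * Real.exp (-n * hfun ρ θ)) -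
        ∫ θ, gA (n * y) (n * θ) * Real.exp (-n * hfun ρ θ)| ≤
       D * (1 / n * Real.exp (-n * hfun ρ y)) := by
  have hL0 := cw_L_nonneg ρ L hL
  obtain ⟨D, hD, hvar⟩ := nh_var ρ L k hk hf (4 * L) (by positivity)
  refine ⟨8 * L * Real.exp D, by positivity, ?_⟩
  intro n hn y hy hyq b hb
  have hN1 : (1 : ℝ) ≤ n := by exact_mod_cast hn
  have hN : (0 : ℝ) < n := by linarith
  rw [← integral_sub (q_int_gA ρ L hL n hn b) (q_int_gA ρ L hL n hn _)]
  have hset : MeasurableSet (Set.Icc (y - 4 * L / n) (y + 4 * L / n)) := measurableSet_Icc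
  calc _ ≤ ∫ θ, (Set.Icc (y - 4 * L / n) (y + 4 * L / n)).indicator
        (fun _ => Real.exp D * Real.exp (-n * hfun ρ y)) θ := by
        rw [← Real.norm_eq_abs]
        refine norm_integral_le_of_norm_le ?_ (Filter.Eventually.of_forall fun θ => ?_)
        · rw [integrable_indicator_iff hset]
          exact integrableOn_const (by simp)
        · rw [← sub_mul, Real.norm_eq_abs, abs_mul, abs_of_pos (Real.exp_pos _)]
          by_cases hθ : θ ∈ Set.Icc (y - 4 * L / n) (y + 4 * L / n)
          · rw [Set.indicator_of_mem hθ]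
            have h1 : |gA b (n * θ) - gA (n * y) (n * θ)| ≤ 1 := by
              have := gA_nonneg b (n * θ)
              have := gA_nonneg (n * y) (n * θ)
              have := gA_le b (n * θ)
              have := gA_le (n * y) (n * θ)
              rw [abs_le]; constructor <;> linarith
            have h2 := hvar n hN1 y hy hyq θ (by
              have : |θ - y| ≤ 4 * L / n := by
                rw [abs_le]; constructor <;> linarith [hθ.1, hθ.2]
              refine this.trans ?_
              gcongr
              rw [Real.sqrt_le_left (by linarith)]
              nlinarith)
            calc _ ≤ 1 * Real.exp (-n * hfun ρ θ) := by gcongr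
              _ ≤ _ := by
                rw [one_mul, ← Real.exp_add]
                gcongr
                have := (abs_le.1 h2).1
                linarith
          · rw [Set.indicator_of_notMem hθ]
            have : gA b (n * θ) = gA (n * y) (n * θ) := by
              have h3 : y + 4 * L / n < θ ∨ θ < y - 4 * L / n := by
                by_contra hcon
                push Not at hcon
                exact hθ ⟨hcon.2, hcon.1⟩
              rw [abs_le] at hb
              unfold gA
              rcases h3 with h3 | h3
              · have h4 := mul_lt_mul_of_pos_left h3 hN
                rw [mul_add, mul_div_cancel₀ _ hN.ne'] at h4
                rw [if_pos (by linarith), if_pos (by linarith)]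
              · have h4 := mul_lt_mul_of_pos_left h3 hN
                rw [mul_sub, mul_div_cancel₀ _ hN.ne'] at h4
                rw [if_neg (by linarith), if_neg (by linarith)]
            rw [this]; simp
    _ = _ := by
        rw [integral_indicator hset, setIntegral_const, Real.volume_real_Icc_of_le (by
          have : 0 ≤ 4 * L / n := by positivity
          linarith), smul_eq_mul]
        ring

theorem main_compare (ρ : Measure ℝ) [IsProbabilityMeasure ρ] (L : ℝ) (hL : ρ (Set.Icc (-L) L) = 1)
    (k : ℕ) (hk : 2 ≤ k) {a C c ε : ℝ} (hf : HFacts ρ L k a C c ε) :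
    ∃ D, 0 ≤ D ∧ ∀ n : ℕ, 1 ≤ n → ∀ y, 0 ≤ y → y ≤ 1 → √(n : ℝ) * y ^ (2 * k - 1) ≤ 1 →
      |gI n * (∫ s, Real.exp (s ^ 2 / (2 * n)) * gA (n * y) s ∂(cwS ρ n)) -
        ∫ θ, gA (n * y) (n * θ) * Real.exp (-n * hfun ρ θ)| ≤ D * cwOm ρ k n y := by
  obtain ⟨D1, hD1, h1⟩ := err_bound ρ L hL k hk hf
  obtain ⟨D2, hD2, h2⟩ := shift_bound ρ L hL k hk hf
  have hL0 := cw_L_nonneg ρ L hL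
  refine ⟨D1 + D2, by positivity, ?_⟩
  intro n hn y hy hy1 hyq
  have := cwS_prob ρ n
  have hN1 : (1 : ℝ) ≤ n := by exact_mod_cast hn
  have hN : (0 : ℝ) < n := by linarith
  have hσ := cwS_ae ρ L hL n
  have hG := gI_pos hN
  rw [← q_A _ hσ hN]
  have hOm : 1 / n * Real.exp (-n * hfun ρ y) ≤ cwOm ρ k n y := by
    unfold cwOm
    gcongr
    have : 0 ≤ gI n * (√(n : ℝ) * (y ^ (2 * k - 1) + (1 / √(n : ℝ)) ^ (2 * k - 1)) +
      (y ^ (2 * k - 2) + (1 / √(n : ℝ)) ^ (2 * k - 2))) := by positivity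
    linarith
  have hOm2 := mul_le_mul_of_nonneg_left hOm hD2
  have hK : ∀ b, ∀ s, |gF n b s| ≤ 2 * √(n : ℝ) + 1 := fun b s => (gF_abs hN b s).trans (by linarith)
  have hKp : (1 : ℝ) ≤ 2 * √(n : ℝ) + 1 := by have := Real.sqrt_nonneg (n : ℝ); linarith
  -- lower
  have low := q_stein ρ L hL n hn k hf (gF n (n * y + 2 * L)) (gA (n * y + 2 * L))
    (gB n (n * y + 2 * L)) (gF_cont hN _).measurable (gA_mono _) (gB_mono hN _) _ (hK _)
    (fun s => (gA_abs _ s).trans hKp) (fun s => (gB_abs hN _ s).trans hKp) (gF_inc hN _)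
  have up := q_stein ρ L hL n hn k hf (fun s => - gF n (n * y - 2 * L) s) (gB n (n * y - 2 * L))
    (gA (n * y - 2 * L)) (gF_cont hN _).neg.measurable (gB_mono hN _) (gA_mono _) _
    (fun s => by rw [abs_neg]; exact hK _ s)
    (fun s => (gB_abs hN _ s).trans hKp) (fun s => (gA_abs _ s).trans hKp) (gF_inc' hN _)
  have e1 := h1 n hn y hy hy1 hyq (n * y + 2 * L) (2 * L) (-(2 * L))
    (by rw [add_sub_cancel_left, abs_of_nonneg (by positivity)])
    (by rw [abs_of_nonneg (by positivity)]) (by rw [abs_neg, abs_of_nonneg (by positivity)])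
  have e2 := h1 n hn y hy hy1 hyq (n * y - 2 * L) (-(2 * L)) (2 * L)
    (by rw [sub_sub_cancel_left, abs_neg, abs_of_nonneg (by positivity)])
    (by rw [abs_neg, abs_of_nonneg (by positivity)]) (by rw [abs_of_nonneg (by positivity)])
  have f1 := h2 n hn y hy hyq (n * y + 4 * L)
    (by rw [add_sub_cancel_left, abs_of_nonneg (by positivity)])
  have f2 := h2 n hn y hy hyq (n * y - 4 * L)
    (by rw [sub_sub_cancel_left, abs_neg, abs_of_nonneg (by positivity)])
  rw [← q_B ρ L hL n hn, ← q_B ρ L hL n hn] at f1 f2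
  rw [← q_B ρ L hL n hn]
  simp only [← sub_eq_add_neg] at e1 e2
  have g1 : (fun p : ℝ × ℝ => gA (n * y + 2 * L) (p.1 + 2 * L)) = fun p => gA (n * y) p.1 := by
    ext p; rw [gA_shift]; congr 1; ring
  have g2 : (fun p : ℝ × ℝ => gB n (n * y + 2 * L) (p.1 - 2 * L)) =
      fun p => gB n (n * y + 4 * L) p.1 := by
    ext p; rw [sub_eq_add_neg, gB_shift]; congr 1; ring
  have g3 : (fun p : ℝ × ℝ => gA (n * y - 2 * L) (p.1 - 2 * L)) = fun p => gA (n * y) p.1 := by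
    ext p; rw [sub_eq_add_neg p.1, gA_shift]; congr 1; ring
  have g4 : (fun p : ℝ × ℝ => gB n (n * y - 2 * L) (p.1 + 2 * L)) =
      fun p => gB n (n * y - 4 * L) p.1 := by
    ext p; rw [gB_shift]; congr 1; ring
  have g5 : (fun p : ℝ × ℝ => deriv (hfun ρ) p.2 * -gF n (n * y - 2 * L) p.1) =
      fun p => (-1) * (deriv (hfun ρ) p.2 * gF n (n * y - 2 * L) p.1) := by
    ext p; ring
  have g6 : (fun p : ℝ × ℝ => deriv (deriv (hfun ρ)) p.2 *
      (gB n (n * y - 2 * L) (p.1 + 2 * L) - gA (n * y - 2 * L) (p.1 - 2 * L))) =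
      fun p => (-1) * (deriv (deriv (hfun ρ)) p.2 *
      (gA (n * y - 2 * L) (p.1 - 2 * L) - gB n (n * y - 2 * L) (p.1 + 2 * L))) := by
    ext p; ring
  rw [g1, g2] at low
  rw [g3, g4, g5, g6, cwQ_const_mul, cwQ_const_mul] at up
  have i1 := neg_abs_le (cwQ (cwS ρ n) n (fun p => deriv (hfun ρ) p.2 * gF n (n * y + 2 * L) p.1))
  have i2 := neg_abs_le (cwQ (cwS ρ n) n (fun p => deriv (deriv (hfun ρ)) p.2 *
      (gA (n * y + 2 * L) (p.1 + 2 * L) - gB n (n * y + 2 * L) (p.1 - 2 * L))))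
  have i3 := le_abs_self (cwQ (cwS ρ n) n (fun p => deriv (hfun ρ) p.2 * gF n (n * y - 2 * L) p.1))
  have i4 := le_abs_self (cwQ (cwS ρ n) n (fun p => deriv (deriv (hfun ρ)) p.2 *
      (gA (n * y - 2 * L) (p.1 - 2 * L) - gB n (n * y - 2 * L) (p.1 + 2 * L))))
  rw [abs_le] at f1 f2 ⊢
  constructor <;> linarith [f1.1, f1.2, f2.1, f2.2]

end P7

section P8

lemma H_lower (k : ℕ) (hk : 1 ≤ k) (v : ℝ) : v ^ 2 - 1 ≤ v ^ (2 * k) := by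
  rw [pow_mul]
  rcases le_total 1 (v ^ 2) with h | h
  · have := le_self_pow₀ h (by omega : k ≠ 0); linarith
  · have : 0 ≤ (v ^ 2) ^ k := by positivity
    linarith

lemma H_int (a : ℝ) (ha : 0 < a) (k : ℕ) (hk : 1 ≤ k) (j : ℕ) :
    Integrable (fun v : ℝ => v ^ j * Real.exp (-(a * v ^ (2 * k)))) := by
  have hN : 0 < 2 * a := by positivity
  have hi := ((gauss_theta_int hN 1).add (gauss_theta_int hN (-1))).const_mul
    (j.factorial * Real.exp a)
  refine hi.mono' (by fun_prop) (Filter.Eventually.of_forall fun v => ?_)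
  simp only [Pi.add_apply]
  rw [Real.norm_eq_abs, abs_mul, abs_pow, abs_of_pos (Real.exp_pos _)]
  have h1 := Real.pow_div_factorial_le_exp |v| (abs_nonneg v) j
  rw [div_le_iff₀ (by positivity)] at h1
  have h2 : Real.exp (-(a * v ^ (2 * k))) ≤ Real.exp (a - a * v ^ 2) := by
    gcongr
    nlinarith [H_lower k hk v]
  have h3 : Real.exp |v| ≤ Real.exp v + Real.exp (-v) := by
    rcases abs_cases v with ⟨e, _⟩ | ⟨e, _⟩
    · rw [e]; linarith [Real.exp_pos (-v)]
    · rw [e]; linarith [Real.exp_pos v]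
  calc _ ≤ ((Real.exp v + Real.exp (-v)) * j.factorial) * Real.exp (a - a * v ^ 2) := by
        gcongr
        exact h1.trans (by gcongr)
    _ = _ := by
        rw [show v * 1 - 2 * a * v ^ 2 / 2 = v - a * v ^ 2 by ring,
          show v * (-1) - 2 * a * v ^ 2 / 2 = -v - a * v ^ 2 by ring,
          Real.exp_sub v, Real.exp_sub (-v), Real.exp_sub a]
        ring

lemma H_int0 (a : ℝ) (ha : 0 < a) (k : ℕ) (hk : 1 ≤ k) :
    Integrable (fun v : ℝ => Real.exp (-(a * v ^ (2 * k)))) := by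
  simpa using H_int a ha k hk 0

noncomputable def hT (a : ℝ) (k : ℕ) (z : ℝ) : ℝ := ∫ v in Set.Ioi z, Real.exp (-(a * v ^ (2 * k)))

lemma hT_anti (a : ℝ) (ha : 0 < a) (k : ℕ) (hk : 1 ≤ k) {z w : ℝ} (h : z ≤ w) :
    hT a k w ≤ hT a k z :=
  setIntegral_mono_set (H_int0 a ha k hk).integrableOn
    (Filter.Eventually.of_forall fun v => (Real.exp_pos _).le)
    (Set.Ioi_subset_Ioi h).eventuallyLE

lemma hT_ge (a : ℝ) (ha : 0 < a) (k : ℕ) (hk : 1 ≤ k) {z δ : ℝ} (hz : 0 ≤ z) (hδ : 0 ≤ δ) :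
    δ * Real.exp (-(a * (z + δ) ^ (2 * k))) ≤ hT a k z := by
  have h1 : ∫ v in Set.Ioc z (z + δ), Real.exp (-(a * v ^ (2 * k))) ≤ hT a k z :=
    setIntegral_mono_set (H_int0 a ha k hk).integrableOn
      (Filter.Eventually.of_forall fun v => (Real.exp_pos _).le)
      (Set.Ioc_subset_Ioi_self).eventuallyLE
  refine le_trans ?_ h1
  have h2 : ∫ v in Set.Ioc z (z + δ), Real.exp (-(a * (z + δ) ^ (2 * k))) ≤
      ∫ v in Set.Ioc z (z + δ), Real.exp (-(a * v ^ (2 * k))) := by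
    refine setIntegral_mono_on (integrableOn_const (by simp)) (H_int0 a ha k hk).integrableOn
      measurableSet_Ioc fun v hv => ?_
    have : 0 ≤ v := hz.trans hv.1.le
    gcongr
    exact hv.2
  rw [setIntegral_const, Real.volume_real_Ioc_of_le (by linarith), smul_eq_mul] at h2
  simpa using h2

lemma hT_pos (a : ℝ) (ha : 0 < a) (k : ℕ) (hk : 1 ≤ k) {z : ℝ} (hz : 0 ≤ z) : 0 < hT a k z :=
  lt_of_lt_of_le (by positivity) (hT_ge a ha k hk hz zero_le_one)

/-- Mills ratio lower bound -/
lemma hT_mills (a : ℝ) (ha : 0 < a) (k : ℕ) (hk : 1 ≤ k) : ∃ D, 0 ≤ D ∧ ∀ z, 0 ≤ z →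
    Real.exp (-(a * z ^ (2 * k))) ≤ D * ((1 + z) ^ (2 * k - 1) * hT a k z) := by
  refine ⟨Real.exp (a * (2 * k)), by positivity, fun z hz => ?_⟩
  set δ := 1 / (1 + z) ^ (2 * k - 1) with hδ
  have hδ0 : 0 < δ := by positivity
  have hδ1 : δ ≤ 1 := by
    rw [hδ, div_le_one (by positivity)]
    exact one_le_pow₀ (by linarith)
  have h1 := hT_ge a ha k hk hz hδ0.le
  have h2 : (z + δ) ^ (2 * k) ≤ z ^ (2 * k) + 2 * k := by
    have hb := abs_pow_sub_pow_le (z + δ) z (2 * k)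
    rw [add_sub_cancel_left, abs_of_pos hδ0, abs_of_nonneg hz,
      abs_of_nonneg (show 0 ≤ z + δ by linarith), max_eq_left (by linarith)] at hb
    have hb1 : (z + δ) ^ (2 * k - 1) ≤ (1 + z) ^ (2 * k - 1) := by
      gcongr 1; linarith
    have hb2 : δ * (1 + z) ^ (2 * k - 1) = 1 := by
      rw [hδ]; field_simp
    have hb3 : δ * ((2 * k : ℕ) : ℝ) * (z + δ) ^ (2 * k - 1) ≤ 2 * k := by
      calc _ ≤ δ * ((2 * k : ℕ) : ℝ) * (1 + z) ^ (2 * k - 1) := by gcongr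
        _ = ((2 * k : ℕ) : ℝ) * (δ * (1 + z) ^ (2 * k - 1)) := by ring
        _ = 2 * k := by rw [hb2]; push_cast; ring
    have := (le_abs_self _).trans (hb.trans hb3)
    linarith
  have h3 : Real.exp (-(a * z ^ (2 * k))) ≤
      Real.exp (a * (2 * k)) * Real.exp (-(a * (z + δ) ^ (2 * k))) := by
    rw [← Real.exp_add]
    gcongr
    nlinarith
  calc _ ≤ _ := h3
    _ = Real.exp (a * (2 * k)) * ((1 + z) ^ (2 * k - 1) *
        (δ * Real.exp (-(a * (z + δ) ^ (2 * k))))) := by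
        rw [hδ]; field_simp
    _ ≤ _ := by gcongr

lemma hT_moment (a : ℝ) (ha : 0 < a) (k : ℕ) (hk : 1 ≤ k) (j : ℕ) : ∃ D, 0 ≤ D ∧ ∀ z, 0 ≤ z →
    ∫ v in Set.Ioi z, v ^ j * Real.exp (-(a * v ^ (2 * k))) ≤ D * ((1 + z) ^ j * hT a k z) := by
  set I := ∫ u in Set.Ioi (0 : ℝ), (1 + u ^ j) * Real.exp (-(a * u ^ (2 * k))) with hI
  have hIi : Integrable (fun u : ℝ => (1 + u ^ j) * Real.exp (-(a * u ^ (2 * k)))) := by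
    simp_rw [add_mul, one_mul]
    exact (H_int0 a ha k hk).add (H_int a ha k hk j)
  have hI0 : 0 ≤ I := setIntegral_nonneg measurableSet_Ioi fun u (hu : 0 < u) => by positivity
  refine ⟨1 + 2 ^ j * I, by positivity, fun z hz => ?_⟩
  have hgint := H_int a ha k hk j
  rw [← Set.Ioc_union_Ioi_eq_Ioi (show z ≤ z + 1 by linarith),
    setIntegral_union (Set.Ioc_disjoint_Ioi le_rfl) measurableSet_Ioi hgint.integrableOn
      hgint.integrableOn]
  have h1 : ∫ v in Set.Ioc z (z + 1), v ^ j * Real.exp (-(a * v ^ (2 * k))) ≤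
      (1 + z) ^ j * hT a k z := by
    calc _ ≤ ∫ v in Set.Ioc z (z + 1), (1 + z) ^ j * Real.exp (-(a * v ^ (2 * k))) := by
          refine setIntegral_mono_on hgint.integrableOn
            ((H_int0 a ha k hk).const_mul _).integrableOn measurableSet_Ioc fun v hv => ?_
          have : 0 ≤ v := hz.trans hv.1.le
          gcongr
          linarith [hv.2]
      _ ≤ ∫ v in Set.Ioi z, (1 + z) ^ j * Real.exp (-(a * v ^ (2 * k))) :=
          setIntegral_mono_set ((H_int0 a ha k hk).const_mul _).integrableOn
            (Filter.Eventually.of_forall fun v => by positivity)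
            (Set.Ioc_subset_Ioi_self).eventuallyLE
      _ = _ := by rw [integral_const_mul]; rfl
  have h2 : ∫ v in Set.Ioi (z + 1), v ^ j * Real.exp (-(a * v ^ (2 * k))) ≤
      2 ^ j * I * ((1 + z) ^ j * hT a k z) := by
    have e : ∫ v in Set.Ioi (z + 1), v ^ j * Real.exp (-(a * v ^ (2 * k))) =
        ∫ u in Set.Ioi (0 : ℝ), (u + (z + 1)) ^ j * Real.exp (-(a * (u + (z + 1)) ^ (2 * k))) := by
      rw [← integral_indicator measurableSet_Ioi, ← integral_indicator measurableSet_Ioi,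
        ← integral_add_right_eq_self _ (z + 1)]
      congr 1
      ext u
      by_cases hu : 0 < u
      · rw [Set.indicator_of_mem (by simpa using hu), Set.indicator_of_mem (by simpa using hu)]
      · rw [Set.indicator_of_notMem (by simpa using hu),
          Set.indicator_of_notMem (by simpa using hu)]
    rw [e]
    calc _ ≤ ∫ u in Set.Ioi (0 : ℝ), (2 ^ j * ((1 + z) ^ j * Real.exp (-(a * (z + 1) ^ (2 * k))))) *
          ((1 + u ^ j) * Real.exp (-(a * u ^ (2 * k)))) := by
          refine setIntegral_mono_on (hgint.comp_add_right (z + 1)).integrableOn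
            (hIi.const_mul _).integrableOn measurableSet_Ioi fun u (hu : 0 < u) => ?_
          have p1 : (u + (z + 1)) ^ j ≤ 2 ^ j * ((1 + z) ^ j * (1 + u ^ j)) := by
            have q1 := add_pow_le hu.le (show 0 ≤ z + 1 by linarith) j
            have q2 : (2 : ℝ) ^ (j - 1) ≤ 2 ^ j := by gcongr <;> [norm_num; omega]
            have q3 : 1 ≤ (1 + z) ^ j := one_le_pow₀ (by linarith)
            have q4 : 0 ≤ u ^ j := by positivity
            calc _ ≤ _ := q1
              _ ≤ 2 ^ j * (u ^ j + (z + 1) ^ j) := by gcongr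
              _ ≤ _ := by
                gcongr
                rw [add_comm z 1]
                nlinarith
          have p2 : Real.exp (-(a * (u + (z + 1)) ^ (2 * k))) ≤
              Real.exp (-(a * (z + 1) ^ (2 * k))) * Real.exp (-(a * u ^ (2 * k))) := by
            rw [← Real.exp_add]
            gcongr
            have := pow_add_pow_le hu.le (show 0 ≤ z + 1 by linarith) (show 2 * k ≠ 0 by omega)
            nlinarith
          calc _ ≤ (2 ^ j * ((1 + z) ^ j * (1 + u ^ j))) *
              (Real.exp (-(a * (z + 1) ^ (2 * k))) * Real.exp (-(a * u ^ (2 * k)))) := by gcongr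
            _ = _ := by ring
      _ = 2 ^ j * I * ((1 + z) ^ j * (1 * Real.exp (-(a * (z + 1) ^ (2 * k))))) := by
          rw [integral_const_mul]; ring
      _ ≤ _ := by
          gcongr
          exact hT_ge a ha k hk hz zero_le_one
  linarith

end P8

section P9

noncomputable def gfun (ρ : Measure ℝ) (k : ℕ) (r v : ℝ) : ℝ := r ^ (2 * k) * hfun ρ (v / r)

lemma gfun_tay {ρ : Measure ℝ} {L : ℝ} {k : ℕ} {a C c ε : ℝ} (hf : HFacts ρ L k a C c ε)
    {r : ℝ} (hr : 1 ≤ r) {v : ℝ} (hv : 0 ≤ v) :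
    |gfun ρ k r v - a * v ^ (2 * k)| ≤ C * v ^ (2 * k + 2) / r ^ 2 := by
  have hr0 : 0 < r := by linarith
  have h := hf.tay (v / r)
  have e : gfun ρ k r v - a * v ^ (2 * k) =
      r ^ (2 * k) * (hfun ρ (v / r) - a * (v / r) ^ (2 * k)) := by
    unfold gfun
    rw [div_pow]; field_simp
  rw [e, abs_mul, abs_of_pos (by positivity)]
  calc _ ≤ r ^ (2 * k) * (C * |v / r| ^ (2 * k + 2)) := by gcongr
    _ = _ := by
      rw [abs_of_nonneg (by positivity), div_pow, pow_add r]
      field_simp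

lemma gfun_low {ρ : Measure ℝ} {L : ℝ} {k : ℕ} (hk : 2 ≤ k) {a C c ε : ℝ}
    (hf : HFacts ρ L k a C c ε) : ∃ C', 0 ≤ C' ∧ ∀ r κ : ℝ, 1 ≤ r → 1 ≤ κ → κ ^ (k + 1) = r →
    ∀ v, 4 * κ ≤ v →
      a * (2 * κ) ^ (2 * k) + min 1 (c / 2) * v - C' ≤ gfun ρ k r v := by
  have ha := hf.ha
  have hc := hf.hc
  have hε := hf.hε
  set B := a * 4 ^ k with hB
  refine ⟨1 / a + a / 4 + B ^ 2 / (2 * (c * ε)), by positivity, fun r κ hr hκ hrk v hv => ?_⟩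
  have hr0 : 0 < r := by linarith
  have hv0 : 0 < v := by linarith
  have hQ : 0 ≤ B ^ 2 / (2 * (c * ε)) := by positivity
  have hA : 0 ≤ 1 / a + a / 4 := by positivity
  rcases le_total v (ε * r) with h | h
  · have h1 := hf.low (v / r) (by positivity) (by rwa [div_le_iff₀ hr0])
    have h2 : a / 2 * v ^ (2 * k) ≤ gfun ρ k r v := by
      unfold gfun
      calc _ = r ^ (2 * k) * (a / 2 * (v / r) ^ (2 * k)) := by rw [div_pow]; field_simp
        _ ≤ _ := by gcongr
    have h3 : 4 * (2 * κ) ^ (2 * k) ≤ v ^ (2 * k) := by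
      calc 4 * (2 * κ) ^ (2 * k) ≤ 2 ^ (2 * k) * (2 * κ) ^ (2 * k) := by
            gcongr
            calc (4 : ℝ) = 2 ^ 2 := by norm_num
              _ ≤ _ := pow_le_pow_right₀ (by norm_num) (by omega)
        _ = (4 * κ) ^ (2 * k) := by rw [← mul_pow]; ring_nf
        _ ≤ _ := by gcongr
    have h4 := H_lower k (by omega) v
    have h5 : v ≤ a / 4 * v ^ 2 + 1 / a := by
      have : 0 ≤ (a / 2 * v - 1) ^ 2 / a := by positivity
      have e : (a / 2 * v - 1) ^ 2 / a = a / 4 * v ^ 2 + 1 / a - v := by field_simp; ring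
      linarith
    have h6 : min 1 (c / 2) * v ≤ v := by
      have := min_le_left 1 (c / 2); nlinarith
    nlinarith
  · have h1 := hf.far (v / r) (by rwa [le_div_iff₀ hr0])
    have h2 : c * r ^ 3 * v ≤ gfun ρ k r v := by
      unfold gfun
      calc c * r ^ 3 * v = r ^ 4 * (c * (v / r)) := by field_simp
        _ ≤ r ^ (2 * k) * (c * (v / r)) := by
            gcongr 1
            exact pow_le_pow_right₀ hr (by omega)
        _ ≤ _ := by gcongr
    have hr3 : 1 ≤ r ^ 3 := one_le_pow₀ hr
    have h3 : min 1 (c / 2) * v ≤ c / 2 * r ^ 3 * v := by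
      gcongr
      exact (min_le_right _ _).trans (by nlinarith)
    have h4 : c * ε / 2 * r ^ 4 ≤ c / 2 * r ^ 3 * v := by
      calc _ = c / 2 * r ^ 3 * (ε * r) := by ring
        _ ≤ _ := by gcongr
    have h5 : a * (2 * κ) ^ (2 * k) ≤ B * r ^ 2 := by
      rw [hB, ← hrk, mul_pow, pow_mul 2, ← pow_mul κ]
      norm_num only
      rw [mul_assoc]
      gcongr ?_ * (?_ * ?_)
      exact pow_le_pow_right₀ hκ (by omega)
    have h6 : B * r ^ 2 ≤ c * ε / 2 * r ^ 4 + B ^ 2 / (2 * (c * ε)) := by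
      have : 0 ≤ (c * ε * r ^ 2 - B) ^ 2 / (2 * (c * ε)) := by positivity
      have e : (c * ε * r ^ 2 - B) ^ 2 / (2 * (c * ε)) =
        c * ε / 2 * r ^ 4 + B ^ 2 / (2 * (c * ε)) - B * r ^ 2 := by field_simp; ring
      linarith
    linarith

lemma exp_diff_le {g H E : ℝ} (h : |g - H| ≤ E) :
    |Real.exp (-g) - Real.exp (-H)| ≤ Real.exp (-H) * (|g - H| * Real.exp E) := by
  have e : Real.exp (-g) - Real.exp (-H) = Real.exp (-H) * (Real.exp (H - g) - 1) := by
    rw [mul_sub, ← Real.exp_add]; ring_nf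
  rw [e, abs_mul, abs_of_pos (Real.exp_pos _)]
  gcongr
  have h1 : |H - g| ≤ E := by rwa [abs_sub_comm]
  rw [abs_sub_comm g H]
  set x := H - g
  have hx := abs_le.1 h1
  have hE : 0 ≤ E := (abs_nonneg _).trans h1
  have hE1 : 1 ≤ Real.exp E := Real.one_le_exp hE
  rcases le_total 0 x with hx0 | hx0
  · have p1 : 1 - x ≤ Real.exp (-x) := by linarith [Real.add_one_le_exp (-x)]
    have p2 : Real.exp x * Real.exp (-x) = 1 := by rw [← Real.exp_add]; simp
    have p3 : Real.exp x ≤ Real.exp E := by gcongr; exact hx.2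
    have p4 : 1 ≤ Real.exp x := Real.one_le_exp hx0
    rw [abs_of_nonneg hx0, abs_of_nonneg (by linarith)]
    have : Real.exp x * (1 - x) ≤ 1 := by
      calc _ ≤ Real.exp x * Real.exp (-x) := by gcongr
        _ = 1 := p2
    nlinarith
  · have p4 : Real.exp x ≤ 1 := Real.exp_le_one_iff.2 hx0
    rw [abs_of_nonpos hx0, abs_of_nonpos (by linarith)]
    have := Real.add_one_le_exp x
    nlinarith

lemma gH_point {ρ : Measure ℝ} {L : ℝ} {k : ℕ} (hk : 2 ≤ k) {a C c ε : ℝ}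
    (hf : HFacts ρ L k a C c ε) : ∃ D, 0 ≤ D ∧ ∀ r κ : ℝ, 1 ≤ r → 1 ≤ κ → κ ^ (k + 1) = r →
    ∀ v, 0 ≤ v → |Real.exp (-gfun ρ k r v) - Real.exp (-(a * v ^ (2 * k)))| ≤
      1 / r ^ 2 * (D * (v ^ (2 * k + 2) * Real.exp (-(a * v ^ (2 * k)))) +
        D * Real.exp (-(a * (2 * κ) ^ (2 * k))) *
          (v ^ (2 * k + 2) * Real.exp (-(min 1 (c / 2) * v)))) := by
  obtain ⟨C', hC', hlow⟩ := gfun_low hk hf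
  have hC := hf.hC
  set E := C * 4 ^ (2 * k + 2) with hE
  refine ⟨C * Real.exp E + 1 + Real.exp C', by positivity, fun r κ hr hκ hrk v hv => ?_⟩
  have hr0 : 0 < r := by linarith
  have hkr : κ ^ (2 * k + 2) = r ^ 2 := by rw [← hrk, ← pow_mul]; ring_nf
  have hn1 : 0 ≤ v ^ (2 * k + 2) * Real.exp (-(a * v ^ (2 * k))) := by positivity
  have hn2 : 0 ≤ Real.exp (-(a * (2 * κ) ^ (2 * k))) *
          (v ^ (2 * k + 2) * Real.exp (-(min 1 (c / 2) * v))) := by positivity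
  set X := v ^ (2 * k + 2) * Real.exp (-(a * v ^ (2 * k))) with hX
  set Y := Real.exp (-(a * (2 * κ) ^ (2 * k))) *
          (v ^ (2 * k + 2) * Real.exp (-(min 1 (c / 2) * v))) with hY
  rcases le_total v (4 * κ) with h | h
  · have h1 := gfun_tay hf hr hv
    have h2 : C * v ^ (2 * k + 2) / r ^ 2 ≤ E := by
      rw [div_le_iff₀ (by positivity), hE, mul_assoc, ← hkr, ← mul_pow]
      gcongr
    have h3 := exp_diff_le (h1.trans h2)
    calc _ ≤ _ := h3
      _ ≤ Real.exp (-(a * v ^ (2 * k))) * (C * v ^ (2 * k + 2) / r ^ 2 * Real.exp E) := by gcongr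
      _ = 1 / r ^ 2 * (C * Real.exp E * X) := by rw [hX]; ring
      _ ≤ _ := by
        rw [mul_assoc _ (Real.exp (-(a * (2 * κ) ^ (2 * k)))), ← hY]
        gcongr
        have : 0 ≤ (1 + Real.exp C') * X := by positivity
        have : 0 ≤ (C * Real.exp E + 1 + Real.exp C') * Y := by positivity
        linarith
  · have h1 := hlow r κ hr hκ hrk v h
    have h2 : Real.exp (-gfun ρ k r v) ≤ Real.exp C' * (Real.exp (-(a * (2 * κ) ^ (2 * k))) *
          Real.exp (-(min 1 (c / 2) * v))) := by
      rw [← Real.exp_add, ← Real.exp_add]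
      gcongr; linarith
    have h3 : 1 ≤ 1 / r ^ 2 * v ^ (2 * k + 2) := by
      rw [one_div, ← div_eq_inv_mul, one_le_div (by positivity), ← hkr]
      gcongr; linarith
    have h4 : |Real.exp (-gfun ρ k r v) - Real.exp (-(a * v ^ (2 * k)))| ≤
        Real.exp (-gfun ρ k r v) + Real.exp (-(a * v ^ (2 * k))) := by
      rw [abs_le]; constructor <;> linarith [Real.exp_pos (-gfun ρ k r v), Real.exp_pos (-(a * v ^ (2 * k)))]
    set S := Real.exp C' * (Real.exp (-(a * (2 * κ) ^ (2 * k))) *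
          Real.exp (-(min 1 (c / 2) * v))) with hS
    have hS0 : 0 ≤ S := by positivity
    calc _ ≤ S + Real.exp (-(a * v ^ (2 * k))) := by linarith
      _ ≤ (1 / r ^ 2 * v ^ (2 * k + 2)) * (S + Real.exp (-(a * v ^ (2 * k)))) :=
          le_mul_of_one_le_left (by positivity) h3
      _ = 1 / r ^ 2 * (X + Real.exp C' * Y) := by rw [hX, hY, hS]; ring
      _ ≤ _ := by
        rw [mul_assoc _ (Real.exp (-(a * (2 * κ) ^ (2 * k)))), ← hY]
        gcongr
        · have : 0 ≤ (C * Real.exp E + Real.exp C') * X := by positivity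
          linarith
        · have : 0 ≤ C * Real.exp E := by positivity
          linarith

end P9

section P10

lemma int_pow_exp (j : ℕ) {b : ℝ} (hb : 0 < b) :
    IntegrableOn (fun v : ℝ => v ^ j * Real.exp (-(b * v))) (Set.Ioi 0) := by
  have := integrableOn_rpow_mul_exp_neg_mul_rpow (s := j) (p := 1) (b := b)
    (by have : (0 : ℝ) ≤ j := by positivity
        linarith) one_pos hb
  simpa using this

lemma gT_compare {ρ : Measure ℝ} {L : ℝ} {k : ℕ} (hk : 2 ≤ k) {a C c ε : ℝ}
    (hf : HFacts ρ L k a C c ε) : ∃ D, 0 ≤ D ∧ ∀ r κ : ℝ, 1 ≤ r → 1 ≤ κ → κ ^ (k + 1) = r →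
    Integrable (fun v => Real.exp (-gfun ρ k r v)) → ∀ z, 0 ≤ z → z ≤ κ →
    |(∫ v in Set.Ioi z, Real.exp (-gfun ρ k r v)) - hT a k z| ≤
      D * (1 / r ^ 2) * (1 + z ^ (2 * k + 2)) * hT a k z := by
  obtain ⟨D, hD, hp⟩ := gH_point hk hf
  have ha := hf.ha
  have hc := hf.hc
  obtain ⟨M, hM, hm⟩ := hT_moment a ha k (by omega) (2 * k + 2)
  have hb : 0 < min 1 (c / 2) := by positivity
  have hi2 := int_pow_exp (2 * k + 2) hb
  set K := ∫ v in Set.Ioi (0 : ℝ), v ^ (2 * k + 2) * Real.exp (-(min 1 (c / 2) * v)) with hK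
  have hK0 : 0 ≤ K := setIntegral_nonneg measurableSet_Ioi fun v (hv : 0 < v) => by positivity
  refine ⟨D * M * 2 ^ (2 * k + 2) + D * K, by positivity, fun r κ hr hκ hrk hgint z hz hzκ => ?_⟩
  have hr0 : 0 < r := by linarith
  have hi1 := H_int a ha k (by omega) (2 * k + 2)
  have hi2z := hi2.mono_set (Set.Ioi_subset_Ioi hz)
  set e := Real.exp (-(a * (2 * κ) ^ (2 * k))) with he
  have hTz := hT_pos a ha k (by omega) hz
  have h1 : |(∫ v in Set.Ioi z, Real.exp (-gfun ρ k r v)) - hT a k z| ≤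
      ∫ v in Set.Ioi z, 1 / r ^ 2 * (D * (v ^ (2 * k + 2) * Real.exp (-(a * v ^ (2 * k)))) +
        D * e * (v ^ (2 * k + 2) * Real.exp (-(min 1 (c / 2) * v)))) := by
    rw [hT, ← integral_sub hgint.integrableOn (H_int0 a ha k (by omega)).integrableOn]
    rw [← Real.norm_eq_abs]
    refine norm_integral_le_of_norm_le
      (((hi1.integrableOn.const_mul D).add (hi2z.const_mul (D * e))).const_mul _) ?_
    refine (ae_restrict_iff' measurableSet_Ioi).2 (Filter.Eventually.of_forall fun v hv => ?_)
    exact hp r κ hr hκ hrk v (hz.trans (le_of_lt hv))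
  have h2 : ∫ v in Set.Ioi z, 1 / r ^ 2 *
        (D * (v ^ (2 * k + 2) * Real.exp (-(a * v ^ (2 * k)))) +
        D * e * (v ^ (2 * k + 2) * Real.exp (-(min 1 (c / 2) * v)))) =
      1 / r ^ 2 * (D * (∫ v in Set.Ioi z, v ^ (2 * k + 2) * Real.exp (-(a * v ^ (2 * k)))) +
        D * e * ∫ v in Set.Ioi z, v ^ (2 * k + 2) * Real.exp (-(min 1 (c / 2) * v))) := by
    rw [integral_const_mul, integral_add (hi1.integrableOn.const_mul D) (hi2z.const_mul (D * e)),
      integral_const_mul, integral_const_mul]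
  have h3 : ∫ v in Set.Ioi z, v ^ (2 * k + 2) * Real.exp (-(min 1 (c / 2) * v)) ≤ K :=
    setIntegral_mono_set hi2
      ((ae_restrict_iff' measurableSet_Ioi).2 (Filter.Eventually.of_forall
        fun v (hv : 0 < v) => by positivity)) (Set.Ioi_subset_Ioi hz).eventuallyLE
  have h4 : e ≤ hT a k z := by
    have q := hT_ge a ha k (by omega) (show 0 ≤ κ by linarith) zero_le_one
    refine le_trans ?_ (q.trans (hT_anti a ha k (by omega) hzκ))
    rw [one_mul, he]
    gcongr; linarith
  have h5 : (1 + z) ^ (2 * k + 2) ≤ 2 ^ (2 * k + 2) * (1 + z ^ (2 * k + 2)) := by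
    have q1 := add_pow_le zero_le_one hz (2 * k + 2)
    rw [one_pow] at q1
    refine q1.trans ?_
    gcongr
    · norm_num
    · omega
  have h6 : 1 ≤ 1 + z ^ (2 * k + 2) := by
    have : 0 ≤ z ^ (2 * k + 2) := by positivity
    linarith
  calc _ ≤ _ := h1
    _ = _ := h2
    _ ≤ 1 / r ^ 2 * (D * (M * ((2 ^ (2 * k + 2) * (1 + z ^ (2 * k + 2))) * hT a k z)) +
        D * hT a k z * (K * (1 + z ^ (2 * k + 2)))) := by
        gcongr
        · exact (hm z hz).trans (by gcongr)
        · exact setIntegral_nonneg measurableSet_Ioi fun v hv => by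
            have : 0 < v := lt_of_le_of_lt hz hv
            positivity
        · exact h3.trans (le_mul_of_one_le_right hK0 h6)
    _ = _ := by ring

lemma exp_g_le {ρ : Measure ℝ} {L : ℝ} {k : ℕ} {a C c ε : ℝ}
    (hf : HFacts ρ L k a C c ε) {r κ : ℝ} (hr : 1 ≤ r) (hrk : κ ^ (k + 1) = r)
    {z : ℝ} (hz : 0 ≤ z) (hzk : z ≤ κ) :
    Real.exp (-gfun ρ k r z) ≤ Real.exp C * Real.exp (-(a * z ^ (2 * k))) ∧
    Real.exp (-(a * z ^ (2 * k))) ≤ Real.exp C * Real.exp (-gfun ρ k r z) := by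
  have h := gfun_tay hf hr hz
  have hr0 : 0 < r := by linarith
  have hC := hf.hC
  have h2 : C * z ^ (2 * k + 2) / r ^ 2 ≤ C := by
    rw [div_le_iff₀ (by positivity)]
    gcongr
    calc z ^ (2 * k + 2) ≤ κ ^ (2 * k + 2) := by gcongr
      _ = r ^ 2 := by rw [← hrk, ← pow_mul]; ring_nf
  have h3 := abs_le.1 (h.trans h2)
  rw [← Real.exp_add, ← Real.exp_add]
  constructor <;> gcongr <;> linarith

lemma gT_zero_low {ρ : Measure ℝ} {L : ℝ} {k : ℕ} {a C c ε : ℝ}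
    (hf : HFacts ρ L k a C c ε) {r κ : ℝ} (hr : 1 ≤ r) (hκ : 1 ≤ κ) (hrk : κ ^ (k + 1) = r)
    (hgint : Integrable (fun v => Real.exp (-gfun ρ k r v))) :
    Real.exp (-(a + C)) ≤ ∫ v in Set.Ioi 0, Real.exp (-gfun ρ k r v) := by
  have h1 : ∫ v in Set.Ioc 0 1, Real.exp (-gfun ρ k r v) ≤
      ∫ v in Set.Ioi 0, Real.exp (-gfun ρ k r v) :=
    setIntegral_mono_set hgint.integrableOn
      (Filter.Eventually.of_forall fun v => (Real.exp_pos _).le)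
      (Set.Ioc_subset_Ioi_self).eventuallyLE
  refine le_trans ?_ h1
  have h2 : ∫ v in Set.Ioc (0:ℝ) 1, Real.exp (-(a + C)) ≤
      ∫ v in Set.Ioc 0 1, Real.exp (-gfun ρ k r v) := by
    refine setIntegral_mono_on (integrableOn_const (by simp)) hgint.integrableOn
      measurableSet_Ioc fun v hv => ?_
    have q := (exp_g_le hf hr hrk hv.1.le (hv.2.trans hκ)).2
    rw [← Real.exp_add, Real.exp_le_exp] at q
    gcongr
    have q2 : v ^ (2 * k) ≤ 1 := pow_le_one₀ hv.1.le hv.2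
    have := mul_le_mul_of_nonneg_left q2 hf.ha.le
    linarith
  rw [setIntegral_const, Real.volume_real_Ioc_of_le (by linarith), smul_eq_mul] at h2
  simpa using h2

end P10

section P11

lemma om_real (j : ℕ) {u z G s t : ℝ} (hu : 0 < u) (hu1 : u ≤ 1) (hz : 0 ≤ z)
    (ht : t = u ^ (j + 2)) (hs : 0 < s) (hst : s * t = 1) (hG : 0 ≤ G) (hGs : G * s ≤ 3) :
    G * (s * ((z * u) ^ (2 * j + 3) + t ^ (2 * j + 3)) + ((z * u) ^ (2 * j + 2) + t ^ (2 * j + 2)))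
      + t ^ 2 ≤ 13 * ((1 + z) ^ (2 * j + 3) * u ^ (2 * j + 3)) := by
  have ht0 : 0 < t := by rw [ht]; positivity
  have ht1 : t ≤ 1 := by rw [ht]; exact pow_le_one₀ hu.le hu1
  have hGt : G ≤ 3 * t := by
    calc G = G * s * t := by rw [mul_assoc, hst, mul_one]
      _ ≤ _ := by gcongr
  have htu : t ≤ u := by
    rw [ht]; exact pow_le_of_le_one hu.le hu1 (by omega)
  have ht2 : t ^ 2 ≤ u ^ (2 * j + 3) := by
    rw [ht, ← pow_mul]; exact pow_le_pow_of_le_one hu.le hu1 (by omega)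
  have hz1 : 1 ≤ (1 + z) ^ (2 * j + 3) := one_le_pow₀ (by linarith)
  have hU : 0 < u ^ (2 * j + 3) := by positivity
  have hmain : u ^ (2 * j + 3) ≤ (1 + z) ^ (2 * j + 3) * u ^ (2 * j + 3) :=
    le_mul_of_one_le_left hU.le hz1
  set V := (1 + z) ^ (2 * j + 3) * u ^ (2 * j + 3) with hV
  have t1 : G * s * (z * u) ^ (2 * j + 3) ≤ 3 * V := by
    rw [mul_pow, hV]; gcongr; linarith
  have t2 : G * s * t ^ (2 * j + 3) ≤ 3 * V := by
    have : t ^ (2 * j + 3) ≤ t ^ 2 := pow_le_pow_of_le_one ht0.le ht1 (by omega)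
    gcongr
    linarith
  have t3 : G * (z * u) ^ (2 * j + 2) ≤ 3 * V := by
    have e1 : z ^ (2 * j + 2) ≤ (1 + z) ^ (2 * j + 3) := by
      calc z ^ (2 * j + 2) ≤ (1 + z) ^ (2 * j + 2) := by gcongr; linarith
        _ ≤ _ := pow_le_pow_right₀ (by linarith) (by omega)
    calc _ ≤ (3 * u) * (z * u) ^ (2 * j + 2) := by gcongr; linarith
      _ = 3 * (z ^ (2 * j + 2) * u ^ (2 * j + 3)) := by rw [mul_pow]; ring
      _ ≤ _ := by rw [hV]; gcongr
  have t4 : G * t ^ (2 * j + 2) ≤ 3 * V := by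
    have : t ^ (2 * j + 3) ≤ t ^ 2 := pow_le_pow_of_le_one ht0.le ht1 (by omega)
    calc _ ≤ (3 * t) * t ^ (2 * j + 2) := by gcongr
      _ = 3 * t ^ (2 * j + 3) := by ring
      _ ≤ _ := by gcongr; linarith
  calc _ = G * s * (z * u) ^ (2 * j + 3) + G * s * t ^ (2 * j + 3) + G * (z * u) ^ (2 * j + 2)
        + G * t ^ (2 * j + 2) + t ^ 2 := by ring
    _ ≤ _ := by linarith

lemma om_real2 (j : ℕ) {r z : ℝ} (hr : 1 ≤ r) (hz : 0 ≤ z) (hzr : z ≤ r) :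
    r * ((1 + z) ^ (2 * j + 3) * (1 / r) ^ (2 * j + 3)) * (1 + z) ^ (2 * j + 3) ≤
      2 ^ (4 * j + 6) * (1 / r ^ 2 * (1 + z ^ (2 * j + 6))) := by
  have hr0 : 0 < r := by linarith
  have h5 : (1 + z) ^ (2 * j + 6) ≤ 2 ^ (2 * j + 6) * (1 + z ^ (2 * j + 6)) := by
    have q1 := add_pow_le zero_le_one hz (2 * j + 6)
    rw [one_pow] at q1
    refine q1.trans ?_
    gcongr
    · norm_num
    · omega
  calc _ = (1 + z) ^ (2 * j + 6) * (1 + z) ^ (2 * j) * (1 / r ^ (2 * j + 2)) := by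
        rw [div_pow, one_pow]
        field_simp
        ring
    _ ≤ (2 ^ (2 * j + 6) * (1 + z ^ (2 * j + 6))) * (2 * r) ^ (2 * j) * (1 / r ^ (2 * j + 2)) := by
        gcongr; linarith
    _ = _ := by
        rw [mul_pow]
        field_simp
        ring

lemma cw_prob (ρ : Measure ℝ) [IsProbabilityMeasure ρ] (n : ℕ) (hn : 1 ≤ n) {r : ℝ} (hr : 0 < r)
    (z : ℝ) :
    (cwMeasure ρ n {x | z ≤ r * ((∑ i, x i) / n)}).toReal =
      (∫ s, Real.exp (s ^ 2 / (2 * n)) * gA (n * (z / r)) s ∂(cwS ρ n)) /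
        ∫ s, Real.exp (s ^ 2 / (2 * n)) ∂(cwS ρ n) := by
  have hn0 : (0 : ℝ) < n := by exact_mod_cast hn
  have hA : MeasurableSet {x : Fin n → ℝ | z ≤ r * ((∑ i, x i) / n)} :=
    measurableSet_le (by fun_prop) (by fun_prop)
  rw [cwMeasure, withDensity_apply _ hA]
  rw [cwS_integral ρ n (fun s => Real.exp (s ^ 2 / (2 * n)) * gA (n * (z / r)) s)
    (by have := gA_meas (n * (z / r)); fun_prop),
    cwS_integral ρ n (fun s => Real.exp (s ^ 2 / (2 * n))) (by fun_prop)]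
  set Z := ∫ y : Fin n → ℝ, Real.exp ((∑ i, y i) ^ 2 / (2 * n)) ∂(Measure.pi fun _ : Fin n => ρ)
    with hZ
  have hZ0 : 0 ≤ Z := integral_nonneg fun x => (Real.exp_pos _).le
  rw [← integral_eq_lintegral_of_nonneg_ae
    (Filter.Eventually.of_forall fun x => div_nonneg (Real.exp_pos _).le hZ0) (by fun_prop),
    ← integral_indicator hA, ← integral_div]
  congr 1
  ext x
  have hiff : (z ≤ r * ((∑ i, x i) / n)) ↔ (n * (z / r) ≤ ∑ i, x i) := by
    rw [← mul_div_assoc r, le_div_iff₀ hn0, ← mul_div_assoc, div_le_iff₀ hr, mul_comm z, mul_comm r]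
  by_cases h : z ≤ r * ((∑ i, x i) / n)
  · rw [Set.indicator_of_mem (by exact h), gA, if_pos (hiff.1 h), mul_one]
  · rw [Set.indicator_of_notMem (by exact h), gA, if_neg (fun h' => h (hiff.2 h')), mul_zero,
      zero_div]

lemma cov_all (ρ : Measure ℝ) (k n : ℕ) {r : ℝ} (hr : 0 < r) (hrn : r ^ (2 * k) = n) :
    ∫ v, Real.exp (-gfun ρ k r v) = r * ∫ θ, Real.exp (-n * hfun ρ θ) := by
  have := Measure.integral_comp_div (fun θ => Real.exp (-n * hfun ρ θ)) r
  rw [abs_of_pos hr, smul_eq_mul] at this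
  rw [← this]
  congr 1; ext v
  rw [gfun, hrn]; ring_nf

lemma cov_int (ρ : Measure ℝ) (k n : ℕ) {r : ℝ} (hr : 0 < r) (hrn : r ^ (2 * k) = n)
    (hi : Integrable (fun θ => Real.exp (-n * hfun ρ θ))) :
    Integrable (fun v => Real.exp (-gfun ρ k r v)) := by
  have := hi.comp_div hr.ne'
  refine this.congr (Filter.Eventually.of_forall fun v => ?_)
  simp only [gfun, hrn]; ring_nf

lemma cov_tail (ρ : Measure ℝ) (k n : ℕ) {r : ℝ} (hr : 0 < r) (hn : 1 ≤ n)
    (hrn : r ^ (2 * k) = n) (z : ℝ) :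
    ∫ v in Set.Ioi z, Real.exp (-gfun ρ k r v) =
      r * ∫ θ, gA (n * (z / r)) (n * θ) * Real.exp (-n * hfun ρ θ) := by
  have hn0 : (0 : ℝ) < n := by exact_mod_cast hn
  have := Measure.integral_comp_div
    (fun θ => gA (n * (z / r)) (n * θ) * Real.exp (-n * hfun ρ θ)) r
  rw [abs_of_pos hr, smul_eq_mul] at this
  rw [← this, ← integral_Ici_eq_integral_Ioi, ← integral_indicator measurableSet_Ici]
  congr 1; ext v
  have hiff : z ≤ v ↔ (n : ℝ) * (z / r) ≤ n * (v / r) := by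
    rw [mul_le_mul_iff_right₀ hn0, div_le_div_iff_of_pos_right hr]
  by_cases h : z ≤ v
  · rw [Set.indicator_of_mem (by exact h), gA, if_pos (hiff.1 h), one_mul, gfun, hrn]; ring_nf
  · rw [Set.indicator_of_notMem (by exact h), gA, if_neg (fun h' => h (hiff.2 h')), zero_mul]

lemma even_half {f : ℝ → ℝ} (hf : ∀ x, f (-x) = f x) :
    ∫ x, f x = 2 * ∫ x in Set.Ioi 0, f x := by
  rw [← integral_comp_abs]
  congr 1; ext x
  rcases abs_choice x with h | h <;> rw [h]
  exact (hf x).symm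

lemma gfun_even {ρ : Measure ℝ} {L : ℝ} {k : ℕ} {a C c ε : ℝ}
    (hf : HFacts ρ L k a C c ε) (r v : ℝ) : gfun ρ k r (-v) = gfun ρ k r v := by
  rw [gfun, gfun, neg_div, hf.even]

end P11

section P12

lemma om_bound {ρ : Measure ℝ} {L : ℝ} {k : ℕ} (hk : 2 ≤ k) {a C c ε : ℝ}
    (hf : HFacts ρ L k a C c ε) : ∃ D, 0 ≤ D ∧ ∀ n : ℕ, 1 ≤ n → ∀ r κ : ℝ, 1 ≤ r → 1 ≤ κ →
    κ ^ (k + 1) = r → r ^ (2 * k) = n → ∀ z, 0 ≤ z → z ≤ κ →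
    r * cwOm ρ k n (z / r) ≤ D * (1 / r ^ 2 * (1 + z ^ (2 * k + 2))) * hT a k z := by
  obtain ⟨M, hM, hm⟩ := hT_mills a hf.ha k (by omega)
  have hC := hf.hC
  refine ⟨13 * 2 ^ (4 * k) * Real.exp C * M, by positivity,
    fun n hn r κ hr hκ hrk hrn z hz hzκ => ?_⟩
  have hr0 : 0 < r := by linarith
  have hn0 : (0 : ℝ) < n := by exact_mod_cast hn
  have hsq : √(n : ℝ) = r ^ k := by
    rw [← hrn, mul_comm 2 k, pow_mul]; exact Real.sqrt_sq (by positivity)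
  have hzr : z ≤ r := by
    rw [← hrk]; exact hzκ.trans (le_self_pow₀ hκ (by omega))
  have hTz := hT_pos a hf.ha k (by omega) hz
  have hg := (exp_g_le hf hr hrk hz hzκ).1
  have hge : Real.exp (-n * hfun ρ (z / r)) = Real.exp (-gfun ρ k r z) := by
    rw [gfun, hrn]; ring_nf
  have hG : gI n * r ^ k ≤ 3 := by
    rw [gI_eq, ← hsq, Real.sqrt_div (by positivity), div_mul_cancel₀ _ (by positivity),
      Real.sqrt_le_left (by norm_num)]
    linarith [Real.pi_lt_four]
  have hG0 := (gI_pos hn0).le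
  obtain ⟨j, rfl⟩ : ∃ j, k = j + 2 := ⟨k - 2, by omega⟩
  have h1 := om_real j (u := 1 / r) (z := z) (G := gI n) (s := r ^ (j + 2))
    (t := (1 / r) ^ (j + 2)) (by positivity)
    (by rw [div_le_one hr0]; exact hr) hz rfl (by positivity)
    (by rw [← mul_pow]; field_simp; simp) hG0 hG
  have h2 := om_real2 j hr hz hzr
  have hm' := hm z hz
  rw [show 2 * (j + 2) - 1 = 2 * j + 3 by omega] at hm'
  have e1 : cwOm ρ (j + 2) n (z / r) =
      (gI n * (r ^ (j + 2) * ((z * (1 / r)) ^ (2 * j + 3) + ((1 / r) ^ (j + 2)) ^ (2 * j + 3)) +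
        ((z * (1 / r)) ^ (2 * j + 2) + ((1 / r) ^ (j + 2)) ^ (2 * j + 2)))
      + ((1 / r) ^ (j + 2)) ^ 2) * Real.exp (-gfun ρ (j + 2) r z) := by
    rw [cwOm, hge, hsq, show 2 * (j + 2) - 1 = 2 * j + 3 by omega,
      show 2 * (j + 2) - 2 = 2 * j + 2 by omega, mul_one_div, div_pow 1 r, one_pow]
    congr 2
    rw [← hrn, div_pow, one_pow, ← pow_mul, mul_comm 2]
  rw [e1]
  set V := (1 + z) ^ (2 * j + 3) with hV
  have hV0 : 0 < V := by positivity
  calc _ ≤ r * ((13 * (V * (1 / r) ^ (2 * j + 3))) *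
        (Real.exp C * (M * (V * hT a (j + 2) z)))) := by
        gcongr
        exact hg.trans (by gcongr)
    _ = 13 * Real.exp C * M * hT a (j + 2) z * (r * (V * (1 / r) ^ (2 * j + 3)) * V) := by ring
    _ ≤ 13 * Real.exp C * M * hT a (j + 2) z *
        (2 ^ (4 * j + 6) * (1 / r ^ 2 * (1 + z ^ (2 * j + 6)))) := by gcongr
    _ ≤ 13 * Real.exp C * M * hT a (j + 2) z *
        (2 ^ (4 * (j + 2)) * (1 / r ^ 2 * (1 + z ^ (2 * j + 6)))) := by
        gcongr
        · norm_num
        · omega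
    _ = _ := by
        rw [show 2 * (j + 2) + 2 = 2 * j + 6 by omega]; ring

lemma y_small (k : ℕ) (hk : 2 ≤ k) {r κ z : ℝ} (hκ : 1 ≤ κ) (hrk : κ ^ (k + 1) = r) (hz : 0 ≤ z)
    (hzκ : z ≤ κ) : r ^ k * (z / r) ^ (2 * k - 1) ≤ 1 := by
  obtain ⟨j, rfl⟩ : ∃ j, k = j + 2 := ⟨k - 2, by omega⟩
  have hr : 0 < r := by rw [← hrk]; positivity
  rw [show 2 * (j + 2) - 1 = 2 * j + 3 by omega]
  have e : r ^ (j + 2) * (z / r) ^ (2 * j + 3) = z ^ (2 * j + 3) / r ^ (j + 1) := by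
    rw [div_pow]; field_simp; ring
  rw [e, div_le_one (by positivity), ← hrk, ← pow_mul]
  calc z ^ (2 * j + 3) ≤ κ ^ (2 * j + 3) := by gcongr
    _ ≤ _ := pow_le_pow_right₀ hκ (by nlinarith)

lemma ratio_alg {A G G0 T T0 e b m q : ℝ} (hT : 0 < T) (hT0 : 0 < T0) (hm : 0 < m)
    (hG0 : m ≤ G0) (hb : 0 ≤ b) (hq : 0 ≤ q) (hqb : q ≤ b)
    (h1 : |A - G| ≤ e * b * T) (he : 0 ≤ e) (h2 : |G - T| ≤ e * b * T)
    (h3 : |G0 - T0| ≤ e * q * T0) :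
    |A / T * (T0 / G0) - 1| ≤ (3 * e * T0 / m) * b := by
  have hG0' : 0 < G0 := by linarith
  have e1 : A / T * (T0 / G0) - 1 = ((A - G) * T0 + (G - T) * T0 - (G0 - T0) * T) / (T * G0) := by
    field_simp; ring
  rw [e1, abs_div, abs_of_pos (show 0 < T * G0 by positivity), div_le_iff₀ (by positivity)]
  have h3' : |G0 - T0| ≤ e * b * T0 := h3.trans (by gcongr)
  have t1 : |(A - G) * T0 + (G - T) * T0 - (G0 - T0) * T| ≤ 3 * (e * b * T * T0) := by
    calc _ ≤ |A - G| * T0 + |G - T| * T0 + |G0 - T0| * T := by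
          refine (abs_sub _ _).trans ?_
          refine (add_le_add_left (abs_add_le _ _) _).trans ?_
          rw [abs_mul, abs_mul, abs_mul, abs_of_pos hT, abs_of_pos hT0]
      _ ≤ e * b * T * T0 + e * b * T * T0 + e * b * T0 * T := by gcongr
      _ = _ := by ring
  refine t1.trans ?_
  calc 3 * (e * b * T * T0) = 3 * e * T0 / m * b * (T * m) := by field_simp
    _ ≤ _ := by gcongr

end P12

theorem stmt_3 (ρ : Measure ℝ) [IsProbabilityMeasure ρ] (L : ℝ) (k : ℕ) (c₁ : ℝ)
    -- `ρ` is symmetric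
    (hsym : ρ.map (fun x => -x) = ρ)
    -- `∫ x² dρ = 1`
    (hvar : (∫ x, x ^ 2 ∂ρ) = 1)
    -- compact support: `ρ([-L, L]) = 1`
    (hL : ρ (Set.Icc (-L) L) = 1)
    -- `h'(s) = 0` has the unique root `s = 0`
    (hroot : ∀ s : ℝ, deriv (hfun ρ) s = 0 ↔ s = 0)
    (hk : 2 ≤ k)
    (hder : ∀ i : ℕ, i ≤ 2 * k - 1 → iteratedDeriv i (hfun ρ) 0 = 0)
    (hpos : 0 < iteratedDeriv (2 * k) (hfun ρ) 0)
    -- `c₁` is the normalizing constant of the density of `Y`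
    (hc₁ : (∫ y : ℝ, c₁ * Real.exp (-(iteratedDeriv (2 * k) (hfun ρ) 0 * y ^ (2 * k)
        / (Nat.factorial (2 * k))))) = 1) :
    ∃ C : ℝ, 0 < C ∧ ∀ n : ℕ, 1 ≤ n → ∀ z : ℝ, 0 < z →
      z < (n : ℝ) ^ ((1 : ℝ) / ((k : ℝ) * (2 * (k : ℝ) + 2))) →
      |(cwMeasure ρ n {x | z ≤ (n : ℝ) ^ ((1 : ℝ) / (2 * (k : ℝ))) * ((∑ i, x i) / n)}).toReal
          / (∫ y in Set.Ici z, c₁ * Real.exp (-(iteratedDeriv (2 * k) (hfun ρ) 0 * y ^ (2 * k)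
              / (Nat.factorial (2 * k))))) - 1|
        ≤ C * (n : ℝ) ^ (-(1 : ℝ) / (k : ℝ)) * (1 + z ^ (2 * k + 2)) := by
  obtain ⟨C, c, ε, hf⟩ := cw_facts ρ L k hsym hL hroot hk hder hpos
  set a := iteratedDeriv (2 * k) (hfun ρ) 0 / (Nat.factorial (2 * k)) with ha
  have ha0 : 0 < a := hf.ha
  have hker : ∀ y : ℝ, Real.exp (-(iteratedDeriv (2 * k) (hfun ρ) 0 * y ^ (2 * k)
        / (Nat.factorial (2 * k)))) = Real.exp (-(a * y ^ (2 * k))) := by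
    intro y; rw [ha]; ring_nf
  simp_rw [hker] at hc₁ ⊢
  have hTT : (∫ y : ℝ, Real.exp (-(a * y ^ (2 * k)))) = 2 * hT a k 0 :=
    even_half (f := fun y : ℝ => Real.exp (-(a * y ^ (2 * k)))) fun x => by
      rw [Even.neg_pow (even_two_mul k)]
  rw [integral_const_mul, hTT] at hc₁
  obtain ⟨D1, hD1, h1⟩ := gT_compare hk hf
  obtain ⟨D2, hD2, h2⟩ := om_bound hk hf
  obtain ⟨D3, hD3, h3⟩ := main_compare ρ L hL k hk hf
  have hT0 : 0 < hT a k 0 := hT_pos a ha0 k (by omega) le_rfl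
  set E := D1 + D3 * D2 with hE
  have hE0 : 0 ≤ E := by positivity
  set m := Real.exp (-(a + C)) with hm
  have hm0 : 0 < m := Real.exp_pos _
  refine ⟨3 * E * hT a k 0 / m + 1, by positivity, fun n hn z hz hzκ => ?_⟩
  have hk0 : (0 : ℝ) < k := by
    have : 0 < k := by omega
    exact_mod_cast this
  have hn1 : (1 : ℝ) ≤ n := by exact_mod_cast hn
  have hn0 : (0 : ℝ) < n := by linarith
  set r := (n : ℝ) ^ ((1 : ℝ) / (2 * (k : ℝ))) with hr
  set κ := (n : ℝ) ^ ((1 : ℝ) / ((k : ℝ) * (2 * (k : ℝ) + 2))) with hκ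
  have hr1 : 1 ≤ r := Real.one_le_rpow hn1 (by positivity)
  have hκ1 : 1 ≤ κ := Real.one_le_rpow hn1 (by positivity)
  have hr0 : 0 < r := by linarith
  have hrk : κ ^ (k + 1) = r := by
    rw [hκ, hr, ← Real.rpow_natCast, ← Real.rpow_mul hn0.le]
    congr 1; push_cast; field_simp
  have hrn : r ^ (2 * k) = n := by
    rw [hr, ← Real.rpow_natCast, ← Real.rpow_mul hn0.le]
    conv_rhs => rw [← Real.rpow_one (n : ℝ)]
    congr 1; push_cast; field_simp
  have hr2 : (n : ℝ) ^ (-(1 : ℝ) / (k : ℝ)) = 1 / r ^ 2 := by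
    rw [hr, ← Real.rpow_natCast, ← Real.rpow_mul hn0.le, one_div, ← Real.rpow_neg hn0.le]
    congr 1; push_cast; field_simp
  have hsq : √(n : ℝ) = r ^ k := by
    rw [← hrn, mul_comm 2 k, pow_mul]; exact Real.sqrt_sq (by positivity)
  have hzr : z ≤ r := by
    rw [← hrk]; exact hzκ.le.trans (le_self_pow₀ hκ1 (by omega))
  have hgint := cov_int ρ k n hr0 hrn (q_int_J ρ L hL n hn)
  have hTz : 0 < hT a k z := hT_pos a ha0 k (by omega) hz.le
  have hJ : r * (gI n * ∫ s, Real.exp (s ^ 2 / (2 * n)) ∂(cwS ρ n)) =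
      2 * ∫ v in Set.Ioi 0, Real.exp (-gfun ρ k r v) := by
    rw [← q_J ρ L hL n hn, ← cov_all ρ k n hr0 hrn]
    exact even_half fun x => by rw [gfun_even hf]
  have h3' := h3 n hn (z / r) (by positivity) (by rwa [div_le_one hr0])
    (by rw [hsq]; exact y_small k hk hκ1 hrk hz.le hzκ.le)
  have hI : gI n ≠ 0 := (gI_pos hn0).ne'
  set Q := ∫ s, Real.exp (s ^ 2 / (2 * n)) * gA (n * (z / r)) s ∂(cwS ρ n) with hQ
  set J := ∫ s, Real.exp (s ^ 2 / (2 * n)) ∂(cwS ρ n) with hJd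
  set G := ∫ v in Set.Ioi z, Real.exp (-gfun ρ k r v) with hG
  set G0 := ∫ v in Set.Ioi 0, Real.exp (-gfun ρ k r v) with hG0
  have hb : 0 ≤ 1 / r ^ 2 * (1 + z ^ (2 * k + 2)) := by positivity
  have k1 : |r * (gI n * Q) - G| ≤ E * (1 / r ^ 2 * (1 + z ^ (2 * k + 2))) * hT a k z := by
    rw [hG, cov_tail ρ k n hr0 hn hrn z, ← mul_sub, abs_mul, abs_of_pos hr0]
    calc _ ≤ r * (D3 * cwOm ρ k n (z / r)) := by gcongr
      _ = D3 * (r * cwOm ρ k n (z / r)) := by ring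
      _ ≤ D3 * (D2 * (1 / r ^ 2 * (1 + z ^ (2 * k + 2))) * hT a k z) := by
          refine mul_le_mul_of_nonneg_left ?_ hD3
          exact h2 n hn r κ hr1 hκ1 hrk hrn z hz.le hzκ.le
      _ = D3 * D2 * (1 / r ^ 2 * (1 + z ^ (2 * k + 2))) * hT a k z := by ring
      _ ≤ _ := by
          gcongr
          rw [hE]; linarith
  have k2 : |G - hT a k z| ≤ E * (1 / r ^ 2 * (1 + z ^ (2 * k + 2))) * hT a k z := by
    refine (h1 r κ hr1 hκ1 hrk hgint z hz.le hzκ.le).trans ?_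
    rw [mul_assoc D1]
    gcongr
    rw [hE]; have : 0 ≤ D3 * D2 := by positivity
    linarith
  have k3 : |G0 - hT a k 0| ≤ E * (1 / r ^ 2) * hT a k 0 := by
    refine (h1 r κ hr1 hκ1 hrk hgint 0 le_rfl (by linarith)).trans ?_
    rw [zero_pow (by omega), add_zero, mul_one]
    gcongr
    rw [hE]; have : 0 ≤ D3 * D2 := by positivity
    linarith
  have k4 := gT_zero_low hf hr1 hκ1 hrk hgint
  have hG0p : 0 < G0 := lt_of_lt_of_le hm0 k4
  have fin := ratio_alg hTz hT0 hm0 k4 hb (show 0 ≤ 1 / r ^ 2 by positivity)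
    (le_mul_of_one_le_right (by positivity)
      (by have : 0 ≤ z ^ (2 * k + 2) := by positivity
          linarith)) k1 hE0 k2 k3
  rw [cw_prob ρ n hn hr0 z, ← hQ, ← hJd, hr2, integral_const_mul, integral_Ici_eq_integral_Ioi]
  change |Q / J / (c₁ * hT a k z) - 1| ≤ _
  have hc : c₁ = 1 / (2 * hT a k 0) := by
    rw [eq_div_iff (by positivity)]; exact hc₁
  have hJ' : J = 2 * G0 / (r * gI n) := by
    rw [eq_div_iff (by positivity), ← hJ]; ring
  have e : Q / J / (c₁ * hT a k z) = r * (gI n * Q) / hT a k z * (hT a k 0 / G0) := by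
    rw [hc, hJ']; field_simp
  rw [e]
  refine fin.trans ?_
  rw [mul_assoc _ (1 / r ^ 2)]
  gcongr
  linarith
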